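/- arXiv:2004.10903 — 2 statements merged into one kernel-verified Lean document; each statement's English description precedes it below -/
import Mathlib

section
/- Let A, B ∈ M₃(ℂ) be such that A is normal, the operator norm of B on Euclidean ℂ³ equals 1, and {(x,y,z) ∈ ℂ³ : det(x·A + y·B + z·AB − I) = 0} = {(x,y,z) ∈ ℂ³ : x³ + y³ + z³ = 1}. Let A₃ = diag(1, e^{2πi/3}, e^{4πi/3}). Then there exists a unitary U ∈ M₃(ℂ) such that either (U A Uᴴ, U B Uᴴ) = (A₃, [[0,1,0],[0,0,1],[1,0,0]]) or (U A Uᴴ, U B Uᴴ) = (A₃, [[0,0,1],[1,0,0],[0,1,0]]). -/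
open Matrix Complex

noncomputable section

/-!
Only the slice `z = 0` of the joint spectrum is needed. If `det (xA + yB - 1)` vanishes on the
Fermat cubic `x³ + y³ = 1`, then `xA + yB` has the three cube roots of `x³ + y³` as eigenvalues
whenever `x³ + y³ ≠ 0`, so by Cayley–Hamilton `(xA + yB)³ = x³ + y³`. Hence

* `A³ = 1` with three distinct eigenvalues, and a normal `A` is unitarily the clock matrix;
* `B³ = 1`, and a contraction `B` with `‖v‖ = ‖B³v‖ ≤ ‖Bv‖ ≤ ‖v‖` is unitary;
* the `x²y` coefficient gives `A²B + ABA + BA² = 0`, whose `i`-th diagonal entry in the eigenbasis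
  of `A` is `3λᵢ²Bᵢᵢ`, so `B` has zero diagonal there.

A `3 × 3` unitary matrix with zero diagonal is a weighted 3-cycle, because its rows are orthogonal,
and conjugation by a diagonal unitary matrix, which fixes `A`, normalises the weights to one.
-/

section Pencil

open Polynomial

variable {n K : Type*} [Fintype n] [DecidableEq n] [Field K]

theorem isRoot_charpoly_inv_of_det_smul_sub_one {M : Matrix n n K} {t : K} (ht : t ≠ 0)
    (h : (t • M - 1).det = 0) : M.charpoly.IsRoot t⁻¹ := by
  have hscale : scalar n t⁻¹ - M = (-t⁻¹) • (t • M - 1) := by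
    rw [scalar_apply, ← smul_one_eq_diagonal, smul_sub, smul_smul, neg_mul, inv_mul_cancel₀ ht]
    module
  rw [IsRoot, eval_charpoly, hscale, det_smul, h, mul_zero]

variable [IsAlgClosed K]

theorem charpoly_eq_X_pow_sub_C_of_isRoot {M : Matrix n n K} {s : K}
    (hn : (Fintype.card n : K) ≠ 0) (hs : s ≠ 0)
    (h : ∀ μ, μ ^ Fintype.card n = s → M.charpoly.IsRoot μ) :
    M.charpoly = X ^ Fintype.card n - C s := by
  have hpos : 0 < Fintype.card n := Nat.pos_of_ne_zero fun h0 ↦ hn (by rw [h0, Nat.cast_zero])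
  have hmonic : (X ^ Fintype.card n - C s).Monic := monic_X_pow_sub_C s hpos.ne'
  have hnodup : (X ^ Fintype.card n - C s).roots.Nodup :=
    nodup_roots (separable_X_pow_sub_C s hn hs)
  have hroots : (X ^ Fintype.card n - C s).roots ≤ M.charpoly.roots := by
    refine (Multiset.le_iff_subset hnodup).2 fun μ hμ ↦ ?_
    rw [mem_roots M.charpoly_monic.ne_zero]
    exact h μ ((mem_nthRoots hpos).1 hμ)
  have hdvd : X ^ Fintype.card n - C s ∣ M.charpoly :=
    (IsAlgClosed.splits _).dvd_of_roots_le_roots hmonic.ne_zero hroots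
  refine eq_of_monic_of_dvd_of_natDegree_le hmonic M.charpoly_monic hdvd ?_
  rw [M.charpoly_natDegree_eq_dim, natDegree_X_pow_sub_C]

variable {A B : Matrix n n K}

theorem charpoly_pencil_eq_X_pow_sub_C (hn : (Fintype.card n : K) ≠ 0)
    (hspec : ∀ x y : K, x ^ Fintype.card n + y ^ Fintype.card n = 1 →
      (x • A + y • B - 1).det = 0)
    {x y : K} (hxy : x ^ Fintype.card n + y ^ Fintype.card n ≠ 0) :
    (x • A + y • B).charpoly =
      X ^ Fintype.card n - C (x ^ Fintype.card n + y ^ Fintype.card n) := by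
  refine charpoly_eq_X_pow_sub_C_of_isRoot hn hxy fun μ hμ ↦ ?_
  have hμ0 : μ ≠ 0 := by
    rintro rfl
    exact hxy (by rw [← hμ, zero_pow fun h0 ↦ hn (by rw [h0, Nat.cast_zero])])
  have hdet : (μ⁻¹ • (x • A + y • B) - 1).det = 0 := by
    rw [smul_add, smul_smul, smul_smul]
    refine hspec _ _ ?_
    rw [mul_pow, mul_pow, ← mul_add, ← hμ, ← mul_pow, inv_mul_cancel₀ hμ0, one_pow]
  simpa only [inv_inv] using isRoot_charpoly_inv_of_det_smul_sub_one (inv_ne_zero hμ0) hdet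

theorem pencil_pow_card (hn : (Fintype.card n : K) ≠ 0)
    (hspec : ∀ x y : K, x ^ Fintype.card n + y ^ Fintype.card n = 1 →
      (x • A + y • B - 1).det = 0)
    {x y : K} (hxy : x ^ Fintype.card n + y ^ Fintype.card n ≠ 0) :
    (x • A + y • B) ^ Fintype.card n =
      (x ^ Fintype.card n + y ^ Fintype.card n) • (1 : Matrix n n K) := by
  have hCH := aeval_self_charpoly (x • A + y • B)
  rw [charpoly_pencil_eq_X_pow_sub_C hn hspec hxy] at hCH
  rwa [map_sub, map_pow, aeval_X, aeval_C, Algebra.algebraMap_eq_smul_one, sub_eq_zero] at hCH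

end Pencil

section Cubic

theorem sq_mul_add_mul_mul_add_mul_sq_eq_zero_of_pow_three_eq_smul_one {K R : Type*} [Field K]
    [CharZero K] [Ring R] [Algebra K R] {a b : R}
    (h : ∀ x y : K, x ^ 3 + y ^ 3 ≠ 0 → (x • a + y • b) ^ 3 = (x ^ 3 + y ^ 3) • (1 : R)) :
    a ^ 2 * b + a * b * a + b * a ^ 2 = 0 := by
  have h10 := h 1 0 (by norm_num)
  have h01 := h 0 1 (by norm_num)
  have h11 := h 1 1 (by norm_num)
  have h12 := h 1 2 (by norm_num)
  -- Interpolation: `4 p(1,1) - p(1,2) - 3 p(1,0) + 4 p(0,1)` kills `x³`, `xy²` and `y³`.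
  have hcombo : (2 : K) • (a ^ 2 * b + a * b * a + b * a ^ 2) =
      (4 : K) • ((1 : K) • a + (1 : K) • b) ^ 3 - ((1 : K) • a + (2 : K) • b) ^ 3 -
        (3 : K) • ((1 : K) • a + (0 : K) • b) ^ 3 + (4 : K) • ((0 : K) • a + (1 : K) • b) ^ 3 := by
    simp only [pow_succ, pow_zero, one_mul, add_mul, mul_add, smul_mul_assoc, mul_smul_comm,
      mul_assoc, smul_add]
    module
  have htwo : (2 : K) • (a ^ 2 * b + a * b * a + b * a ^ 2) = 0 := by
    rw [hcombo, h10, h01, h11, h12]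
    module
  exact (smul_eq_zero_iff_right two_ne_zero).1 htwo

theorem apply_self_eq_zero_of_diagonal_sq_mul_add_eq_zero {n K : Type*} [Fintype n]
    [DecidableEq n] [Field K] [CharZero K] {d : n → K} {C : Matrix n n K}
    (h : diagonal d ^ 2 * C + diagonal d * C * diagonal d + C * diagonal d ^ 2 = 0) {i : n}
    (hd : d i ≠ 0) : C i i = 0 := by
  have hentry : 3 * d i ^ 2 * C i i = 0 := by
    calc 3 * d i ^ 2 * C i i
        = (diagonal d ^ 2 * C + diagonal d * C * diagonal d + C * diagonal d ^ 2) i i := by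
          simp only [diagonal_pow, Matrix.add_apply, diagonal_mul, mul_diagonal, Pi.pow_apply]
          ring
      _ = 0 := by rw [h, Matrix.zero_apply]
  simpa [hd] using hentry

end Cubic

section Unitary

variable {𝕜 : Type*} [RCLike 𝕜]

theorem norm_map_of_pow_eq_one {E : Type*} [SeminormedAddCommGroup E] [NormedSpace 𝕜 E]
    {T : E →L[𝕜] E} (hT : ‖T‖ ≤ 1) {k : ℕ} (hk : k ≠ 0) (hpow : T ^ k = 1) (v : E) :
    ‖T v‖ = ‖v‖ := by
  have hcontract (w : E) : ‖T w‖ ≤ ‖w‖ := by simpa using T.le_of_opNorm_le hT w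
  have hiter (m : ℕ) (w : E) : ‖(T ^ m) w‖ ≤ ‖w‖ := by
    induction m with
    | zero => simp
    | succ m ih =>
      rw [pow_succ']
      exact (hcontract _).trans ih
  obtain ⟨m, rfl⟩ := Nat.exists_eq_succ_of_ne_zero hk
  refine (hcontract v).antisymm ?_
  calc ‖v‖ = ‖(T ^ m) (T v)‖ := by
        rw [← mul_apply_eq_comp, ← pow_succ, hpow, one_apply_eq_self]
    _ ≤ ‖T v‖ := hiter m (T v)

variable {n : Type*} [Fintype n] [DecidableEq n]

theorem mem_unitaryGroup_of_pow_eq_one {B : Matrix n n 𝕜}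
    (hB : ‖toEuclideanCLM (𝕜 := 𝕜) B‖ ≤ 1) {k : ℕ} (hk : k ≠ 0) (hpow : B ^ k = 1) :
    B ∈ unitaryGroup n 𝕜 := by
  have hpow' : toEuclideanCLM (𝕜 := 𝕜) B ^ k = 1 := by rw [← map_pow, hpow, map_one]
  have hadj := (ContinuousLinearMap.norm_map_iff_adjoint_comp_self _).1
    (norm_map_of_pow_eq_one hB hk hpow')
  refine mem_unitaryGroup_iff'.2 (EquivLike.injective (toEuclideanCLM (n := n) (𝕜 := 𝕜)) ?_)
  rw [map_mul, map_star, map_one]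
  exact hadj

theorem inner_eq_zero_of_isStarNormal_of_apply_eq_smul {E : Type*} [NormedAddCommGroup E]
    [InnerProductSpace 𝕜 E] [CompleteSpace E] {T : E →L[𝕜] E} (hT : IsStarNormal T) {μ ν : 𝕜}
    (hμν : μ ≠ ν) {u v : E} (hu : T u = μ • u) (hv : T v = ν • v) : inner 𝕜 u v = 0 := by
  have hnormal : IsStarNormal (T - μ • 1) :=
    Commute.isStarNormal_sub (by simp [Commute.smul_right])
  have hadj : ContinuousLinearMap.adjoint (T - μ • 1) u = 0 :=
    (ContinuousLinearMap.IsStarNormal.adjoint_apply_eq_zero_iff hnormal u).2 (by simp [hu])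
  have hmul : (ν - μ) * inner 𝕜 u v = 0 := by
    calc (ν - μ) * inner 𝕜 u v = inner 𝕜 u ((T - μ • 1) v) := by
          simp [hv, ← sub_smul, inner_smul_right]
      _ = 0 := by rw [← ContinuousLinearMap.adjoint_inner_left, hadj, inner_zero_left]
  exact (mul_eq_zero.1 hmul).resolve_left (sub_ne_zero.2 hμν.symm)

theorem exists_orthonormal_eigenvectors {A : Matrix n n 𝕜} (hA : IsStarNormal A) {d : n → 𝕜}
    (hd : Function.Injective d) (hroot : ∀ i, A.charpoly.IsRoot (d i)) :
    ∃ v : n → EuclideanSpace 𝕜 n, Orthonormal 𝕜 v ∧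
      ∀ i, toEuclideanCLM (𝕜 := 𝕜) A (v i) = d i • v i := by
  have hev (i : n) : ∃ v : EuclideanSpace 𝕜 n,
      ‖v‖ = 1 ∧ toEuclideanCLM (𝕜 := 𝕜) A v = d i • v := by
    have hspec : d i ∈ spectrum 𝕜 (toEuclideanLin A) := by
      rw [spectrum_toLpLin, mem_spectrum_iff_isRoot_charpoly]
      exact hroot i
    obtain ⟨v, hv⟩ := (Module.End.hasEigenvalue_iff_mem_spectrum.2 hspec).exists_hasEigenvector
    refine ⟨(‖v‖⁻¹ : 𝕜) • v, norm_smul_inv_norm hv.2, ?_⟩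
    rw [map_smul, smul_comm (d i)]
    exact congrArg _ hv.apply_eq_smul
  choose v hnorm happly using hev
  have hnormal : IsStarNormal (toEuclideanCLM (n := n) (𝕜 := 𝕜) A) := hA.map _
  exact ⟨v, ⟨hnorm, fun i j hij ↦ inner_eq_zero_of_isStarNormal_of_apply_eq_smul hnormal
    (hd.ne hij) (happly i) (happly j)⟩, happly⟩

theorem exists_conjStarAlgAut_eq_diagonal {A : Matrix n n 𝕜} (hA : IsStarNormal A) {d : n → 𝕜}
    (hd : Function.Injective d) (hroot : ∀ i, A.charpoly.IsRoot (d i)) :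
    ∃ U : unitaryGroup n 𝕜, Unitary.conjStarAlgAut 𝕜 _ U A = diagonal d := by
  obtain ⟨v, hv, happly⟩ := exists_orthonormal_eigenvectors hA hd hroot
  have horth (i j : n) : star (v i).ofLp ⬝ᵥ (v j).ofLp = (1 : Matrix n n 𝕜) i j := by
    rw [one_apply, ← orthonormal_iff_ite.1 hv i j, EuclideanSpace.inner_eq_star_dotProduct,
      dotProduct_comm]
  have happly' (j : n) : A *ᵥ (v j).ofLp = d j • (v j).ofLp := congrArg WithLp.ofLp (happly j)
  refine ⟨⟨of fun i ↦ star (v i).ofLp, mem_unitaryGroup_iff.2 ?_⟩, ?_⟩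
  · ext i j
    rw [← horth]
    simp [Matrix.mul_apply, dotProduct]
  · ext i j
    calc _ = star (v i).ofLp ⬝ᵥ (A *ᵥ (v j).ofLp) := by
          rw [Unitary.conjStarAlgAut_apply, Matrix.mul_assoc]
          simp [Matrix.mul_apply, dotProduct, mulVec]
      _ = d j * (1 : Matrix n n 𝕜) i j := by rw [happly', dotProduct_smul, horth, smul_eq_mul]
      _ = diagonal d i j := by
          rcases eq_or_ne i j with rfl | hij
          · simp
          · simp [hij]

theorem exists_conjStarAlgAut_eq_diagonal_pow {n : ℕ} {A : Matrix (Fin n) (Fin n) 𝕜}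
    (hA : IsStarNormal A) (hchar : A.charpoly = Polynomial.X ^ n - Polynomial.C 1) {ω : 𝕜}
    (hω : IsPrimitiveRoot ω n) :
    ∃ U : unitaryGroup (Fin n) 𝕜,
      Unitary.conjStarAlgAut 𝕜 _ U A = diagonal fun i : Fin n ↦ ω ^ (i : ℕ) := by
  refine exists_conjStarAlgAut_eq_diagonal hA
    (fun i j hij ↦ Fin.ext (hω.pow_inj i.isLt j.isLt hij)) fun i ↦ ?_
  rw [hchar, Polynomial.IsRoot, Polynomial.eval_sub, Polynomial.eval_pow, Polynomial.eval_X,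
    Polynomial.eval_C, pow_right_comm, hω.pow_eq_one, one_pow, sub_self]

end Unitary

section Cyclic

variable {R : Type*} [CommRing R] [StarRing R]

theorem diagonal_mem_unitaryGroup {n : Type*} [Fintype n] [DecidableEq n] {d : n → R}
    (hd : ∀ i, d i ∈ unitary R) : diagonal d ∈ unitaryGroup n R := by
  rw [mem_unitaryGroup_iff, star_eq_conjTranspose, diagonal_conjTranspose, diagonal_mul_diagonal,
    ← diagonal_one]
  exact congrArg diagonal (funext fun i ↦ Unitary.mul_star_self_of_mem (hd i))

theorem diagonal_mul_diagonal_mul_star_diagonal {n : Type*} [Fintype n] [DecidableEq n] {d : n → R}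
    (hd : ∀ i, d i ∈ unitary R) (e : n → R) :
    diagonal d * diagonal e * star (diagonal d) = diagonal e := by
  rw [(commute_diagonal d e).eq, Matrix.mul_assoc,
    mem_unitaryGroup_iff.1 (diagonal_mem_unitaryGroup hd), Matrix.mul_one]

theorem eq_weighted_cycle_of_mem_unitaryGroup [IsDomain R] {C : Matrix (Fin 3) (Fin 3) R}
    (hC : C ∈ unitaryGroup (Fin 3) R) (hdiag : ∀ i, C i i = 0) :
    ∃ a ∈ unitary R, ∃ b ∈ unitary R, ∃ c ∈ unitary R,
      C = !![0, a, 0; 0, 0, b; c, 0, 0] ∨ C = !![0, 0, a; b, 0, 0; 0, c, 0] := by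
  have hrow (i j : Fin 3) : C i 0 * star (C j 0) + C i 1 * star (C j 1) + C i 2 * star (C j 2) =
      (1 : Matrix (Fin 3) (Fin 3) R) i j := by
    rw [← mem_unitaryGroup_iff.1 hC]
    simp [Matrix.mul_apply, Fin.sum_univ_three]
  have h00 := hrow 0 0
  have h11 := hrow 1 1
  have h22 := hrow 2 2
  have h01 := hrow 0 1
  have h02 := hrow 0 2
  have h12 := hrow 1 2
  simp only [hdiag, star_zero, mul_zero, zero_mul, add_zero, zero_add, mul_eq_zero, star_eq_zero,
    one_apply_eq, one_apply_ne (show (0 : Fin 3) ≠ 1 by decide),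
    one_apply_ne (show (0 : Fin 3) ≠ 2 by decide),
    one_apply_ne (show (1 : Fin 3) ≠ 2 by decide)] at h00 h11 h22 h01 h02 h12
  rw [eta_fin_three C, hdiag, hdiag, hdiag]
  by_cases h : C 0 2 = 0
  · have h01_ne : C 0 1 ≠ 0 := fun h0 ↦ by simp [h, h0] at h00
    have h21 : C 2 1 = 0 := h02.resolve_left h01_ne
    have h20_ne : C 2 0 ≠ 0 := fun h0 ↦ by simp [h21, h0] at h22
    have h10 : C 1 0 = 0 := h12.resolve_right h20_ne
    simp only [h, h10, h21, zero_mul, add_zero, zero_add] at h00 h11 h22 ⊢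
    exact ⟨C 0 1, Unitary.mem_iff_self_mul_star.2 h00, C 1 2, Unitary.mem_iff_self_mul_star.2 h11,
      C 2 0, Unitary.mem_iff_self_mul_star.2 h22, Or.inl rfl⟩
  · have h12' : C 1 2 = 0 := h01.resolve_left h
    have h10_ne : C 1 0 ≠ 0 := fun h0 ↦ by simp [h12', h0] at h11
    have h20 : C 2 0 = 0 := h12.resolve_left h10_ne
    have h21_ne : C 2 1 ≠ 0 := fun h0 ↦ by simp [h20, h0] at h22
    have h01' : C 0 1 = 0 := h02.resolve_right h21_ne
    simp only [h12', h20, h01', zero_mul, add_zero, zero_add] at h00 h11 h22 ⊢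
    exact ⟨C 0 2, Unitary.mem_iff_self_mul_star.2 h00, C 1 0, Unitary.mem_iff_self_mul_star.2 h11,
      C 2 1, Unitary.mem_iff_self_mul_star.2 h22, Or.inr rfl⟩

theorem exists_diagonal_conj_weighted_cycle {a b c : R} (ha : a ∈ unitary R) (hb : b ∈ unitary R)
    (habc : a * b * c = 1) :
    ∃ d : Fin 3 → R, (∀ i, d i ∈ unitary R) ∧
      diagonal d * !![0, a, 0; 0, 0, b; c, 0, 0] * star (diagonal d) =
        !![0, 1, 0; 0, 0, 1; 1, 0, 0] := by
  have hab : a * b ∈ unitary R := mul_mem ha hb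
  have ha_star : a * star a = 1 := Unitary.mul_star_self_of_mem ha
  have hab_star : a * b * (star a * star b) = 1 := by
    rw [← star_mul', Unitary.mul_star_self_of_mem hab]
  refine ⟨![1, a, a * b], by simp [Fin.forall_fin_succ, ha, hab], ?_⟩
  rw [star_eq_conjTranspose, diagonal_conjTranspose]
  ext i j
  fin_cases i <;> fin_cases j <;> simp [ha_star, hab_star, habc]

theorem exists_diagonal_conj_weighted_inverse_cycle {a b c : R} (ha : a ∈ unitary R)
    (hc : c ∈ unitary R) (habc : a * b * c = 1) :
    ∃ d : Fin 3 → R, (∀ i, d i ∈ unitary R) ∧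
      diagonal d * !![0, 0, a; b, 0, 0; 0, c, 0] * star (diagonal d) =
        !![0, 0, 1; 1, 0, 0; 0, 1, 0] := by
  have hac : a * c ∈ unitary R := mul_mem ha hc
  have ha_star : a * star a = 1 := Unitary.mul_star_self_of_mem ha
  have hac_star : a * c * (star a * star c) = 1 := by
    rw [← star_mul', Unitary.mul_star_self_of_mem hac]
  have hacb : a * c * b = 1 := by rw [mul_right_comm, habc]
  refine ⟨![1, a * c, a], by simp [Fin.forall_fin_succ, ha, hac], ?_⟩
  rw [star_eq_conjTranspose, diagonal_conjTranspose]
  ext i j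
  fin_cases i <;> fin_cases j <;> simp [ha_star, hac_star, hacb]

theorem exists_diagonal_conj_eq_cycle [IsDomain R] {C : Matrix (Fin 3) (Fin 3) R}
    (hC : C ∈ unitaryGroup (Fin 3) R) (hdiag : ∀ i, C i i = 0) (hcube : C ^ 3 = 1) :
    ∃ d : Fin 3 → R, (∀ i, d i ∈ unitary R) ∧
      (diagonal d * C * star (diagonal d) = !![0, 1, 0; 0, 0, 1; 1, 0, 0] ∨
        diagonal d * C * star (diagonal d) = !![0, 0, 1; 1, 0, 0; 0, 1, 0]) := by
  have hcube₀₀ : (C ^ 3) 0 0 = 1 := by rw [hcube, one_apply_eq]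
  obtain ⟨a, ha, b, hb, c, hc, rfl | rfl⟩ := eq_weighted_cycle_of_mem_unitaryGroup hC hdiag
  · have habc : a * b * c = 1 := by simpa [pow_succ] using hcube₀₀
    obtain ⟨d, hd, hconj⟩ := exists_diagonal_conj_weighted_cycle ha hb habc
    exact ⟨d, hd, Or.inl hconj⟩
  · have habc : a * b * c = 1 := by
      simpa [pow_succ, mul_right_comm a c b] using hcube₀₀
    obtain ⟨d, hd, hconj⟩ := exists_diagonal_conj_weighted_inverse_cycle ha hc habc
    exact ⟨d, hd, Or.inr hconj⟩

end Cyclic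

theorem diagonal_exp_eq_diagonal_pow :
    diagonal ![1, exp (2 * Real.pi * I / 3), exp (4 * Real.pi * I / 3)] =
      diagonal fun i : Fin 3 ↦ exp (2 * Real.pi * I / 3) ^ (i : ℕ) := by
  have hexp : exp (4 * Real.pi * I / 3) = exp (2 * Real.pi * I / 3) ^ 2 := by
    rw [← exp_nat_mul]
    congr 1
    push_cast
    ring
  rw [hexp]
  congr 1
  ext i
  fin_cases i <;> simp

theorem stmt_4_general {A B : Matrix (Fin 3) (Fin 3) ℂ} (hA : IsStarNormal A)
    (hB : ‖toEuclideanCLM (𝕜 := ℂ) B‖ ≤ 1)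
    (hspec : ∀ x y : ℂ, x ^ 3 + y ^ 3 = 1 → (x • A + y • B - 1).det = 0)
    {ω : ℂ} (hω : IsPrimitiveRoot ω 3) :
    ∃ U ∈ unitaryGroup (Fin 3) ℂ, U * A * Uᴴ = diagonal (fun i : Fin 3 ↦ ω ^ (i : ℕ)) ∧
      (U * B * Uᴴ = !![0, 1, 0; 0, 0, 1; 1, 0, 0] ∨
        U * B * Uᴴ = !![0, 0, 1; 1, 0, 0; 0, 1, 0]) := by
  have hcard : (Fintype.card (Fin 3) : ℂ) ≠ 0 := by simp
  have hpow (x y : ℂ) (hxy : x ^ 3 + y ^ 3 ≠ 0) := pencil_pow_card hcard hspec hxy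
  have hB_cube : B ^ 3 = 1 := by simpa using hpow 0 1 (by simp)
  have hA_char : A.charpoly = Polynomial.X ^ 3 - Polynomial.C 1 := by
    simpa using charpoly_pencil_eq_X_pow_sub_C hcard hspec (x := 1) (y := 0) (by simp)
  obtain ⟨V, hVA⟩ := exists_conjStarAlgAut_eq_diagonal_pow hA hA_char hω
  set φ := Unitary.conjStarAlgAut ℂ (Matrix (Fin 3) (Fin 3) ℂ) V
  have hφB : φ B ∈ unitaryGroup (Fin 3) ℂ :=
    Unitary.map_mem φ (mem_unitaryGroup_of_pow_eq_one hB three_ne_zero hB_cube)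
  have hφB_cube : φ B ^ 3 = 1 := by rw [← map_pow, hB_cube, map_one]
  have hφB_diag (i : Fin 3) : φ B i i = 0 := by
    refine apply_self_eq_zero_of_diagonal_sq_mul_add_eq_zero
      (d := fun i : Fin 3 ↦ ω ^ (i : ℕ)) ?_ (pow_ne_zero i (hω.ne_zero three_ne_zero))
    simpa [hVA] using
      congrArg φ (sq_mul_add_mul_mul_add_mul_sq_eq_zero_of_pow_three_eq_smul_one hpow)
  obtain ⟨d, hd, hcycle⟩ := exists_diagonal_conj_eq_cycle hφB hφB_diag hφB_cube
  have hconj (M : Matrix (Fin 3) (Fin 3) ℂ) :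
      diagonal d * V.1 * M * (diagonal d * V.1)ᴴ = diagonal d * φ M * star (diagonal d) := by
    simp only [φ, Unitary.conjStarAlgAut_apply, conjTranspose_mul, star_eq_conjTranspose,
      Matrix.mul_assoc]
  refine ⟨diagonal d * V.1, mul_mem (diagonal_mem_unitaryGroup hd) V.2, ?_⟩
  rw [hconj, hconj, hVA, diagonal_mul_diagonal_mul_star_diagonal hd]
  exact ⟨rfl, hcycle⟩

theorem stmt_4
    (A B : Matrix (Fin 3) (Fin 3) ℂ)
    (hA : A * Aᴴ = Aᴴ * A)
    (hB : ‖Matrix.toEuclideanCLM (𝕜 := ℂ) B‖ = 1)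
    (hspec : {p : ℂ × ℂ × ℂ |
        (p.1 • A + p.2.1 • B + p.2.2 • (A * B) - 1).det = 0} =
      {p : ℂ × ℂ × ℂ | p.1 ^ 3 + p.2.1 ^ 3 + p.2.2 ^ 3 = 1})
    (A₃ : Matrix (Fin 3) (Fin 3) ℂ)
    (hA₃ : A₃ = Matrix.diagonal
      ![1, Complex.exp (2 * Real.pi * Complex.I / 3),
        Complex.exp (4 * Real.pi * Complex.I / 3)]) :
    ∃ U : Matrix (Fin 3) (Fin 3) ℂ, U * Uᴴ = 1 ∧
      ((U * A * Uᴴ = A₃ ∧ U * B * Uᴴ = !![0,1,0; 0,0,1; 1,0,0]) ∨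
       (U * A * Uᴴ = A₃ ∧ U * B * Uᴴ = !![0,0,1; 1,0,0; 0,1,0])) := by
  have hpair (x y : ℂ) (hxy : x ^ 3 + y ^ 3 = 1) : (x • A + y • B - 1).det = 0 := by
    simpa [hxy] using (Set.ext_iff.1 hspec (x, y, 0)).2
  have hω : IsPrimitiveRoot (exp (2 * Real.pi * I / 3)) 3 :=
    mod_cast isPrimitiveRoot_exp 3 three_ne_zero
  obtain ⟨U, hU, hUA, hUB⟩ := stmt_4_general ⟨hA.symm⟩ hB.le hpair hω
  rw [hA₃, diagonal_exp_eq_diagonal_pow]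
  exact ⟨U, mem_unitaryGroup_iff.1 hU, hUB.imp (⟨hUA, ·⟩) (⟨hUA, ·⟩)⟩
end
end

section
/- Let n = 5, ω = exp(2πi/5), let A₅ ∈ M₅(ℂ) be the diagonal matrix with (A₅)_{jj} = ω^j for j = 0,…,4, and let B̂₅ ∈ M₅(ℂ) be the cyclic shift matrix with (B̂₅)_{jk} = 1 if j ≡ k+1 (mod 5) and 0 otherwise. Let A, B ∈ M₅(ℂ) be such that A is normal, the operator norm of B on Euclidean ℂ⁵ equals 1, and {(x,y,z) ∈ ℂ³ : det(x·A + y·B + z·AB − I) = 0} = {(x,y,z) ∈ ℂ³ : x⁵ + y⁵ + z⁵ = 1}. Then there exist a 5×5 permutation matrix P and a unitary U ∈ M₅(ℂ) such that either (U A Uᴴ, U B Uᴴ) = (Pᵀ A₅ P, B̂₅) or (U A Uᴴ, U B Uᴴ) = (B̂₅, Pᵀ A₅ P). -/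
open Matrix Complex

noncomputable section

/-- A permutation matrix: the matrix of a permutation `σ`, sending the standard
basis vector `e j` to `e (σ j)`. -/
def IsPermMatrix {n : ℕ} (P : Matrix (Fin n) (Fin n) ℂ) : Prop :=
  ∃ σ : Equiv.Perm (Fin n),
    P = Matrix.of fun i j : Fin n => if i = σ j then 1 else 0

/-
The joint spectrum makes the characteristic polynomials of `A` and `B` equal to `X ^ 5 - 1`, so
that `B ^ 5 = 1`, which together with `‖B‖ ≤ 1` makes `B` unitary, and `A` may be taken to be
`diag a` with `a` enumerating the fifth roots of unity. Cutting the spectrum by lines shows that the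
pencils `diag (a k - a i) + s • diag (a k - a j) * B` are singular. Let `R` be the diagonal matrix
of the quotients `(a k - a j) / (a k - a i)`, with entry `0` at `k = i`; the expansion in `s` says
that the `(i, i)` entries of all `B * (R * B) ^ m` vanish.

Since `R * B` has rank at most `3`, these equations force `(R * B) ^ 2` to act on the basis vector
`e i`, or on row `i` of `B` from the right, as a multiple of `R * B`. If `B` takes no basis vector
to a multiple of another, it follows that `R` links column `i` of `B` to the conjugate of row `j`,
or else column `j` to row `i`. No index can have three links of the same kind, so the links form a
regular tournament on five points, which is cyclic. Then `B * B` is a combination of `B` and two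
cyclic diagonals; unitarity makes `B` circulant after a diagonal change of phases, and the `a k`
are in geometric progression, so that the powers of `A` applied to an eigenvector of `B` form an
eigenbasis of `B`.

If `B` does take a basis vector to a multiple of another, the vanishing moments propagate this
along a path through all five, and the powers of `B` applied to its first vector form an eigenbasis
of `A`. In the eigenbasis, one matrix is the shift and the other a rearrangement of the diagonal
matrix of roots of unity.
-/

section Pencil

variable {n : Type*} [Fintype n] [DecidableEq n]

lemma dotProduct_eq_zero_of_adjugate {C : Matrix n n ℂ} {x y : n → ℂ}
    (h : ∀ s : ℂ, s ≠ 0 → y ⬝ᵥ (adjugate (1 + s • C) *ᵥ x) = 0) : y ⬝ᵥ x = 0 := by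
  have hcont : Continuous fun s : ℂ => y ⬝ᵥ (adjugate (1 + s • C) *ᵥ x) := by fun_prop
  have hzero : (fun s : ℂ => y ⬝ᵥ (adjugate (1 + s • C) *ᵥ x)) = fun _ => 0 :=
    hcont.ext_on (dense_compl_singleton 0) continuous_const h
  simpa using congrFun hzero 0

lemma dotProduct_pow_mulVec_eq_zero_of_adjugate {C : Matrix n n ℂ} {x y : n → ℂ}
    (h : ∀ s : ℂ, s ≠ 0 → y ⬝ᵥ (adjugate (1 + s • C) *ᵥ x) = 0) (m : ℕ) :
    y ⬝ᵥ (C ^ m *ᵥ x) = 0 := by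
  induction m generalizing x with
  | zero => simpa using dotProduct_eq_zero_of_adjugate h
  | succ m ih =>
    rw [pow_succ, ← mulVec_mulVec]
    refine ih fun s hs => ?_
    have key : y ⬝ᵥ (adjugate (1 + s • C) *ᵥ ((1 + s • C) *ᵥ x)) = 0 := by
      rw [mulVec_mulVec, adjugate_mul, smul_mulVec, one_mulVec, dotProduct_smul,
        dotProduct_eq_zero_of_adjugate h, smul_zero]
    rw [add_mulVec, one_mulVec, mulVec_add, dotProduct_add, h s hs, zero_add, smul_mulVec,
      mulVec_smul, dotProduct_smul, smul_eq_mul] at key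
    exact (mul_eq_zero.mp key).resolve_left hs

lemma det_updateRow_eq_dotProduct_adjugate {R : Type*} [CommRing R] (A : Matrix n n R) (i : n)
    (b : n → R) : (A.updateRow i b).det = b ⬝ᵥ (adjugate A *ᵥ Pi.single i 1) := by
  rw [← cramer_transpose_apply, cramer_eq_adjugate_mulVec, ← adjugate_transpose, mulVec_transpose,
    dotProduct_mulVec, dotProduct_single_one]

-- If `e i ≠ 0`, the pencil is a nonzero multiple of `1 + s C` with row `i` replaced by that of `B`.
lemma mul_pow_apply_self_eq_zero_of_det_eq_zero {d e : n → ℂ} {B : Matrix n n ℂ} {i : n}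
    (hd : ∀ k, d k = 0 ↔ k = i) (he : e i ≠ 0)
    (hdet : ∀ s : ℂ, (diagonal d + s • (diagonal e * B)).det = 0) (m : ℕ) :
    (B * (diagonal (e / d) * B) ^ m) i i = 0 := by
  set C := diagonal (e / d) * B with hC
  have factor (s : ℂ) : diagonal d + s • (diagonal e * B) =
      diagonal (Function.update d i (s * e i)) * (1 + s • C).updateRow i (B i) := by
    ext k l
    rcases eq_or_ne k i with rfl | hk
    · simp [(hd k).mpr rfl, diagonal_apply, mul_assoc]
    · have hdk : d k ≠ 0 := mt (hd k).mp hk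
      simp only [hC, Matrix.add_apply, Matrix.smul_apply, diagonal_mul, updateRow_ne hk,
        Function.update_of_ne hk, Pi.div_apply, smul_eq_mul, diagonal_apply, one_apply, mul_add,
        mul_ite, mul_one, mul_zero]
      field_simp
  have hq (s : ℂ) (hs : s ≠ 0) : B i ⬝ᵥ (adjugate (1 + s • C) *ᵥ Pi.single i 1) = 0 := by
    have h := hdet s
    rw [factor, det_mul, det_diagonal, det_updateRow_eq_dotProduct_adjugate] at h
    refine (mul_eq_zero.mp h).resolve_left (Finset.prod_ne_zero_iff.mpr fun k _ => ?_)
    rcases eq_or_ne k i with rfl | hk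
    · simpa using ⟨hs, he⟩
    · simpa [hk] using mt (hd k).mp hk
  have := dotProduct_pow_mulVec_eq_zero_of_adjugate hq m
  rwa [mulVec_single_one] at this

/-- The values at the points `a k` of the Möbius function with zero `a j` and pole `a i`. The value
at `k = i` is `0`, as division by zero yields. -/
def mobius (a : n → ℂ) (i j k : n) : ℂ := (a k - a j) / (a k - a i)

/-- The pencils `diag (a k - a i) + s • diag (a k - a j) * B`, `i ≠ j`, have determinant zero for
all `s`, expressed through the coefficients of their expansion in `s`. -/
def MomentsVanish (a : n → ℂ) (B : Matrix n n ℂ) : Prop :=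
  ∀ i j, i ≠ j → ∀ m : ℕ, (B * (diagonal (mobius a i j) * B) ^ m) i i = 0

lemma momentsVanish_of_det_eq_zero {a : n → ℂ} {B : Matrix n n ℂ} (ha : Function.Injective a)
    (hdet : ∀ i j, ∀ s : ℂ,
      (diagonal (fun k => a k - a i) + s • (diagonal (fun k => a k - a j) * B)).det = 0) :
    MomentsVanish a B := fun i j hij =>
  mul_pow_apply_self_eq_zero_of_det_eq_zero (d := fun k => a k - a i) (e := fun k => a k - a j)
    (fun k => by rw [sub_eq_zero, ha.eq_iff]) (sub_ne_zero.mpr (ha.ne hij)) (hdet i j)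

/-- `diag a` and the unitary matrix `B` have singular pencils, the `a k` being the roots of unity of
order `card n`: what remains of the joint spectrum once the normal matrix is diagonalised. -/
structure FermatPair (a : n → ℂ) (B : Matrix n n ℂ) : Prop where
  injective : Function.Injective a
  pow_card : ∀ k, a k ^ Fintype.card n = 1
  unitary : B ∈ unitaryGroup n ℂ
  moments : MomentsVanish a B

namespace FermatPair

variable {a : n → ℂ} {B : Matrix n n ℂ}

lemma ne_zero [Nonempty n] (h : FermatPair a B) (k : n) : a k ≠ 0 := fun hk => by
  simpa [hk] using h.pow_card k

lemma star_eq_inv [Nonempty n] (h : FermatPair a B) (k : n) : star (a k) = (a k)⁻¹ := by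
  exact (Complex.inv_eq_conj (norm_eq_one_of_pow_eq_one (h.pow_card k) Fintype.card_ne_zero)).symm

lemma apply_self [Nontrivial n] (h : FermatPair a B) (i : n) : B i i = 0 := by
  obtain ⟨j, hij⟩ := exists_ne i
  simpa using h.moments i j hij.symm 0

lemma star_mobius [Nonempty n] (h : FermatPair a B) (i j k : n) :
    star (mobius a i j k) = a i / a j * mobius a i j k := by
  rcases eq_or_ne k i with rfl | hk
  · simp [mobius]
  have hki : a k - a i ≠ 0 := sub_ne_zero.mpr (h.injective.ne hk)
  have hik : a i - a k ≠ 0 := sub_ne_zero.mpr (h.injective.ne hk.symm)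
  have hi := h.ne_zero i
  have hj := h.ne_zero j
  have hk := h.ne_zero k
  simp only [mobius, star_div₀, star_sub, h.star_eq_inv]
  rw [div_eq_iff (by rw [inv_sub_inv hk hi]; exact div_ne_zero hik (mul_ne_zero hk hi))]
  field_simp
  ring

lemma diagonal_mem_unitaryGroup [Nonempty n] (h : FermatPair a B) :
    diagonal a ∈ unitaryGroup n ℂ := by
  rw [mem_unitaryGroup_iff, star_eq_conjTranspose, diagonal_conjTranspose, diagonal_mul_diagonal,
    ← diagonal_one]
  congr 1
  ext k
  rw [Pi.star_apply, h.star_eq_inv, mul_inv_cancel₀ (h.ne_zero k)]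

lemma conjTranspose_diagonal_mobius [Nonempty n] (h : FermatPair a B) (i j : n) :
    (diagonal (mobius a i j))ᴴ = (a i / a j) • diagonal (mobius a i j) := by
  ext k l
  rcases eq_or_ne k l with rfl | hkl
  · simpa using h.star_mobius i j k
  · simp [hkl, hkl.symm]

lemma conjTranspose [Nonempty n] (h : FermatPair a B) : FermatPair a Bᴴ where
  injective := h.injective
  pow_card := h.pow_card
  unitary := Unitary.star_mem h.unitary
  moments i j hij m := by
    set R := diagonal (mobius a i j)
    have hconj : (B * (R * B) ^ m)ᴴ = (a i / a j) ^ m • (Bᴴ * (R * Bᴴ) ^ m) := by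
      have hcomm : B * (R * B) ^ m = (B * R) ^ m * B :=
        SemiconjBy.pow_right (show SemiconjBy B (R * B) (B * R) from (mul_assoc B R B).symm) m
      rw [hcomm, conjTranspose_mul, conjTranspose_pow, conjTranspose_mul,
        h.conjTranspose_diagonal_mobius, smul_mul_assoc, smul_pow, mul_smul_comm]
    have hii := congrFun (congrFun hconj i) i
    rw [conjTranspose_apply, h.moments i j hij m, star_zero, Matrix.smul_apply, smul_eq_mul] at hii
    exact (mul_eq_zero.mp hii.symm).resolve_left
      (pow_ne_zero m (div_ne_zero (h.ne_zero i) (h.ne_zero j)))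

lemma submatrix {m : Type*} [Fintype m] [DecidableEq m] (h : FermatPair a B) (e : m ≃ n) :
    FermatPair (a ∘ e) (B.submatrix e e) where
  injective := h.injective.comp e.injective
  pow_card k := by rw [Fintype.card_congr e]; exact h.pow_card (e k)
  unitary := by
    rw [mem_unitaryGroup_iff, star_eq_conjTranspose, conjTranspose_submatrix, submatrix_mul_equiv,
      ← star_eq_conjTranspose, mem_unitaryGroup_iff.mp h.unitary, submatrix_one_equiv]
  moments i j hij l := by
    have hR : diagonal (mobius (a ∘ e) i j) = (diagonal (mobius a (e i) (e j))).submatrix e e := by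
      rw [submatrix_diagonal_equiv]
      rfl
    have hpow : (diagonal (mobius (a ∘ e) i j) * B.submatrix e e) ^ l =
        ((diagonal (mobius a (e i) (e j)) * B) ^ l).submatrix e e := by
      rw [hR, submatrix_mul_equiv]
      exact (map_pow (reindexAlgEquiv ℂ ℂ e.symm) (diagonal (mobius a (e i) (e j)) * B) l).symm
    rw [hpow, submatrix_mul_equiv]
    exact h.moments (e i) (e j) (e.injective.ne hij) l

end FermatPair

end Pencil

section Rank

open Module

lemma not_linearIndependent_and_of_finrank_le_three {K V : Type*} [Field K] [AddCommGroup V]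
    [Module K V] [FiniteDimensional K V] (hV : finrank K V ≤ 3) {v : Fin 2 → V}
    {f : Fin 2 → Dual K V} (hfv : ∀ i j, f i (v j) = 0) :
    ¬ (LinearIndependent K v ∧ LinearIndependent K f) := by
  rintro ⟨hv, hf⟩
  have hle : Submodule.span K (Set.range v) ≤
      (Submodule.span K (Set.range f)).dualCoannihilator := by
    rw [Submodule.span_le]
    rintro _ ⟨j, rfl⟩
    rw [SetLike.mem_coe, Submodule.mem_dualCoannihilator]
    intro φ hφ
    induction hφ using Submodule.span_induction with
    | mem φ hφ => obtain ⟨i, rfl⟩ := hφ; exact hfv i j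
    | zero => rfl
    | add φ ψ _ _ hφ hψ => simp [hφ, hψ]
    | smul c φ _ hφ => simp [hφ]
  have hdim := Subspace.finrank_add_finrank_dualCoannihilator_eq (Submodule.span K (Set.range f))
  have := Submodule.finrank_mono hle
  rw [finrank_span_eq_card hv, Fintype.card_fin] at this
  rw [finrank_span_eq_card hf, Fintype.card_fin] at hdim
  omega

lemma exists_mulVec_sq_or_vecMul_sq_eq_smul {K n : Type*} [Field K] [Fintype n] [DecidableEq n]
    {C : Matrix n n K} (hC : C.rank ≤ 3) {x y : n → K}
    (h : ∀ m : ℕ, y ⬝ᵥ (C ^ (m + 1) *ᵥ x) = 0) :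
    (∃ c : K, C ^ 2 *ᵥ x = c • (C *ᵥ x)) ∨ ∃ c : K, y ᵥ* C ^ 2 = c • (y ᵥ* C) := by
  by_contra! ⟨hx, hy⟩
  let W := LinearMap.range C.mulVecLin
  let v : Fin 2 → W := ![⟨C *ᵥ x, x, rfl⟩, ⟨C *ᵥ (C *ᵥ x), C *ᵥ x, rfl⟩]
  let f : Fin 2 → Dual K W :=
    ![(dotProductBilin K K y).domRestrict W, (dotProductBilin K K (y ᵥ* C)).domRestrict W]
  have hfv : ∀ i j, f i (v j) = 0 := by
    have h0 := h 0
    have h1 := h 1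
    have h2 := h 2
    simp only [pow_succ', pow_zero, mul_one, zero_add] at h0 h1 h2
    intro i j
    fin_cases i <;> fin_cases j <;>
      simpa [f, v, dotProductBilin, ← dotProduct_mulVec]
  have hf_apply (w : n → K) : f 0 ⟨C *ᵥ w, w, rfl⟩ = y ᵥ* C ⬝ᵥ w ∧
      f 1 ⟨C *ᵥ w, w, rfl⟩ = y ᵥ* C ^ 2 ⬝ᵥ w := by
    simp [f, dotProductBilin, dotProduct_mulVec, sq]
  refine not_linearIndependent_and_of_finrank_le_three hC hfv ⟨?_, ?_⟩
  · refine (LinearIndependent.pair_iff' fun h0 => hx 0 ?_).mpr fun c hc => hx c ?_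
    · rw [sq, ← mulVec_mulVec, show C *ᵥ x = 0 from congrArg Subtype.val h0, mulVec_zero,
        smul_zero]
    · rw [sq, ← mulVec_mulVec]
      exact (congrArg Subtype.val hc).symm
  · refine (LinearIndependent.pair_iff' fun h0 => hy 0 ?_).mpr fun c hc => hy c ?_
    · have hyC : y ᵥ* C = 0 := dotProduct_eq_zero _ fun w => by
        rw [← (hf_apply w).1]; exact LinearMap.congr_fun h0 _
      rw [sq, ← vecMul_vecMul, hyC, zero_vecMul, smul_zero]
    · refine dotProduct_eq _ _ fun w => ?_
      rw [smul_dotProduct, ← (hf_apply w).1, ← (hf_apply w).2]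
      exact (LinearMap.congr_fun hc _).symm

end Rank

section Dichotomy

variable {n : Type*}

/-- Multiplication by `mobius a i j` turns column `i` of `B` into a nonzero multiple of the
conjugate of row `j`; the denominators are cleared. -/
def Linked (a : n → ℂ) (B : Matrix n n ℂ) (i j : n) : Prop :=
  ∃ μ : ℂ, μ ≠ 0 ∧ ∀ k, (a k - a j) * B k i = μ * (a k - a i) * star (B j k)

lemma Linked.conjTranspose {a : n → ℂ} {B : Matrix n n ℂ} {i j : n}
    (h : Linked a B i j) :
    Linked a Bᴴ j i := by
  obtain ⟨μ, hμ, hlink⟩ := h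
  refine ⟨μ⁻¹, inv_ne_zero hμ, fun k => ?_⟩
  rw [conjTranspose_apply, conjTranspose_apply, star_star, mul_assoc, hlink k]
  field_simp

variable [Fintype n] [DecidableEq n]

/-- `B` maps the `i`-th basis vector to a multiple of the `j`-th one. -/
def MapsBasis (B : Matrix n n ℂ) (i j : n) : Prop := ∀ k, k ≠ j → B k i = 0

lemma sum_star_mul_eq_of_mem_unitaryGroup {B : Matrix n n ℂ} (hB : B ∈ unitaryGroup n ℂ)
    (i j : n) : ∑ k, star (B k i) * B k j = if i = j then 1 else 0 := by
  rw [← one_apply, ← mem_unitaryGroup_iff'.mp hB]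
  rfl

lemma exists_apply_ne_zero_of_mem_unitaryGroup {B : Matrix n n ℂ} (hB : B ∈ unitaryGroup n ℂ)
    (i : n) : ∃ k, B k i ≠ 0 := by
  by_contra! hcol
  simpa [hcol] using sum_star_mul_eq_of_mem_unitaryGroup hB i i

lemma exists_apply_ne_zero_of_mem_unitaryGroup' {B : Matrix n n ℂ} (hB : B ∈ unitaryGroup n ℂ)
    (i : n) : ∃ k, B i k ≠ 0 := by
  obtain ⟨k, hk⟩ := exists_apply_ne_zero_of_mem_unitaryGroup (Unitary.star_mem hB) i
  exact ⟨k, star_ne_zero.mp hk⟩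

namespace MapsBasis

variable {B : Matrix n n ℂ} {i j : n}

lemma apply_ne_zero (h : MapsBasis B i j) (hB : B ∈ unitaryGroup n ℂ) : B j i ≠ 0 := by
  obtain ⟨k, hk⟩ := exists_apply_ne_zero_of_mem_unitaryGroup hB i
  rcases eq_or_ne k j with rfl | hkj
  exacts [hk, absurd (h k hkj) hk]

lemma row_eq_zero (h : MapsBasis B i j) (hB : B ∈ unitaryGroup n ℂ) {k : n} (hk : k ≠ i) :
    B j k = 0 := by
  have horth := sum_star_mul_eq_of_mem_unitaryGroup hB i k
  rw [Fintype.sum_eq_single j fun l hl => by rw [h l hl, star_zero, zero_mul], if_neg hk.symm]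
    at horth
  exact (mul_eq_zero.mp horth).resolve_left (star_ne_zero.mpr (h.apply_ne_zero hB))

lemma of_row (hB : B ∈ unitaryGroup n ℂ) (h : ∀ k, k ≠ i → B j k = 0) : MapsBasis B i j := by
  have hmaps : MapsBasis Bᴴ j i := fun k hk => by rw [conjTranspose_apply, h k hk, star_zero]
  intro k hk
  simpa using hmaps.row_eq_zero (Unitary.star_mem hB) hk

lemma conjTranspose (h : MapsBasis B i j) (hB : B ∈ unitaryGroup n ℂ) : MapsBasis Bᴴ j i :=
  fun k hk => by rw [conjTranspose_apply, h.row_eq_zero hB hk, star_zero]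

end MapsBasis

namespace FermatPair

variable {a : n → ℂ} {B : Matrix n n ℂ}

lemma mobius_ne_zero (h : FermatPair a B) {i j k : n} (hki : k ≠ i) (hkj : k ≠ j) :
    mobius a i j k ≠ 0 :=
  div_ne_zero (sub_ne_zero.mpr (h.injective.ne hkj)) (sub_ne_zero.mpr (h.injective.ne hki))

lemma exists_mobius_mul_eq_mul_star [Nontrivial n] (h : FermatPair a B) {i j : n} (hij : i ≠ j)
    {c : ℂ} (hc : (diagonal (mobius a i j) * B) ^ 2 *ᵥ Pi.single i 1 =
      c • ((diagonal (mobius a i j) * B) *ᵥ Pi.single i 1)) :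
    ∃ μ : ℂ, ∀ k, k ≠ i → mobius a i j k * B k i = μ * star (B j k) := by
  set R := diagonal (mobius a i j) with hR
  have hcol (k : n) (hki : k ≠ i) (hkj : k ≠ j) : (B * R * B) k i = c * B k i := by
    have := congrFun hc k
    rw [mulVec_single_one, mulVec_single_one, sq, mul_assoc, ← mul_assoc B] at this
    refine mul_left_cancel₀ (h.mobius_ne_zero hki hkj) (Eq.trans ?_ (mul_left_comm c _ _))
    simpa [hR] using this
  have hii : (B * R * B) i i = 0 := by simpa [mul_assoc] using h.moments i j hij 1
  set μ := (B * R * B) j i - c * B j i with hμ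
  have hBRB : (B * R * B) *ᵥ Pi.single i 1 = c • (B *ᵥ Pi.single i 1) + μ • Pi.single j 1 := by
    ext k
    simp only [mulVec_single_one, Pi.add_apply, Pi.smul_apply, smul_eq_mul, col_apply]
    rcases eq_or_ne k j with rfl | hkj
    · simp [hμ]
    rcases eq_or_ne k i with rfl | hki
    · simp [hii, h.apply_self, hkj]
    · simp [hcol k hki hkj, hkj]
  have hRB : (R * B) *ᵥ Pi.single i 1 = c • Pi.single i 1 + μ • (Bᴴ *ᵥ Pi.single j 1) := by
    have hBB : Bᴴ * B = 1 := mem_unitaryGroup_iff'.mp h.unitary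
    have := congrArg (Bᴴ *ᵥ ·) hBRB
    simpa only [mulVec_add, mulVec_smul, mulVec_mulVec, ← mul_assoc, hBB, one_mul, one_mulVec]
      using this
  exact ⟨μ, fun k hki => by simpa [hR, hki] using congrFun hRB k⟩

lemma linked_of_mulVec_sq [Nontrivial n] (h : FermatPair a B) {i j : n} (hij : i ≠ j)
    (hmaps : ¬MapsBasis B i j) {c : ℂ}
    (hc : (diagonal (mobius a i j) * B) ^ 2 *ᵥ Pi.single i 1 =
      c • ((diagonal (mobius a i j) * B) *ᵥ Pi.single i 1)) : Linked a B i j := by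
  obtain ⟨μ, hμ⟩ := h.exists_mobius_mul_eq_mul_star hij hc
  refine ⟨μ, ?_, fun k => ?_⟩
  · rintro rfl
    refine hmaps fun k hkj => ?_
    rcases eq_or_ne k i with rfl | hki
    · exact h.apply_self k
    · simpa [h.mobius_ne_zero hki hkj] using hμ k hki
  · rcases eq_or_ne k i with rfl | hki
    · simp [h.apply_self]
    · have := hμ k hki
      rw [mobius, div_mul_eq_mul_div, div_eq_iff (sub_ne_zero.mpr (h.injective.ne hki))] at this
      rw [this]
      ring

lemma linked_of_vecMul_sq [Nontrivial n] (h : FermatPair a B) {i j : n} (hij : i ≠ j)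
    (hmaps : ¬MapsBasis B j i) {c : ℂ}
    (hc : B i ᵥ* (diagonal (mobius a i j) * B) ^ 2 = c • (B i ᵥ* (diagonal (mobius a i j) * B))) :
    Linked a B j i := by
  set R := diagonal (mobius a i j)
  have hρ : a i / a j ≠ 0 := div_ne_zero (h.ne_zero i) (h.ne_zero j)
  have hBB : B * Bᴴ = 1 := mem_unitaryGroup_iff.mp h.unitary
  have hrow : B i ᵥ* (R * B * R) = c • (B i ᵥ* R) := by
    have := congrArg (· ᵥ* Bᴴ) hc
    simpa only [sq, smul_vecMul, vecMul_vecMul, mul_assoc, hBB, mul_one] using this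
  have hstar : (a i / a j) ^ 2 • ((R * Bᴴ) ^ 2 *ᵥ Pi.single i 1) =
      star c • (a i / a j) • ((R * Bᴴ) *ᵥ Pi.single i 1) := by
    have hcol : star (B i) = Bᴴ *ᵥ Pi.single i 1 := (mulVec_single_one Bᴴ i).symm
    have := congrArg star hrow
    rwa [star_smul, star_vecMul, star_vecMul, conjTranspose_mul, conjTranspose_mul,
      h.conjTranspose_diagonal_mobius, smul_mul_assoc, mul_smul_comm, mul_smul_comm, smul_smul,
      ← sq, smul_mulVec, smul_mulVec, hcol, mulVec_mulVec, mulVec_mulVec, mul_assoc, mul_assoc,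
      ← mul_assoc, ← sq] at this
  have hlink : Linked a Bᴴ i j := h.conjTranspose.linked_of_mulVec_sq hij
    (fun hm => hmaps (by simpa using hm.conjTranspose h.conjTranspose.unitary))
    (c := star c / (a i / a j)) ?_
  · simpa using hlink.conjTranspose
  · refine smul_right_injective _ (pow_ne_zero 2 hρ) (hstar.trans ?_)
    simp only [smul_smul]
    congr 1
    field_simp

lemma linked_or_linked [Nontrivial n] (hn : Fintype.card n ≤ 5) (h : FermatPair a B)
    (hmaps : ∀ i j, ¬MapsBasis B i j) {i j : n} (hij : i ≠ j) :
    Linked a B i j ∨ Linked a B j i := by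
  have hrank : (diagonal (mobius a i j) * B).rank ≤ 3 := by
    refine (rank_mul_le_left _ _).trans ?_
    rw [rank_diagonal, Fintype.card_subtype]
    have hsub : (Finset.univ.filter fun k => mobius a i j k ≠ 0) ⊆ {i, j}ᶜ := fun k hk => by
      simp only [Finset.mem_filter, Finset.mem_univ, true_and] at hk
      simp only [Finset.mem_compl, Finset.mem_insert, Finset.mem_singleton]
      rintro (rfl | rfl) <;> simp [mobius] at hk
    have := Finset.card_le_card hsub
    rw [Finset.card_compl, Finset.card_pair hij] at this
    omega
  have hmom (m : ℕ) :
      B i ⬝ᵥ ((diagonal (mobius a i j) * B) ^ (m + 1) *ᵥ Pi.single i 1) = 0 := by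
    rw [mulVec_single_one]
    exact h.moments i j hij (m + 1)
  rcases exists_mulVec_sq_or_vecMul_sq_eq_smul hrank hmom with ⟨c, hc⟩ | ⟨c, hc⟩
  · exact Or.inl (h.linked_of_mulVec_sq hij (hmaps i j) hc)
  · exact Or.inr (h.linked_of_vecMul_sq hij (hmaps j i) hc)

end FermatPair

end Dichotomy

section Links

variable {n : Type*} [Fintype n] [DecidableEq n] {a : n → ℂ} {B : Matrix n n ℂ}

namespace FermatPair

-- On `k ≠ i` one has `mobius a i j k = 1 + (a i - a j) / (a k - a i)`.
lemma exists_sq_apply_of_linked [Nontrivial n] (h : FermatPair a B) {i j : n}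
    (hlink : Linked a B i j) : ∃ c μ : ℂ, μ ≠ 0 ∧ ∀ l, (B * B) l i +
      (a i - a j) * (B * diagonal (fun k => (a k - a i)⁻¹) * B) l i =
        c * B l i + μ * (1 : Matrix n n ℂ) l j := by
  obtain ⟨μ, hμ, hlink⟩ := hlink
  refine ⟨-(μ * star (B j i)), μ, hμ, fun l => ?_⟩
  have hterm (k : n) : B k i + (a i - a j) * ((a k - a i)⁻¹ * B k i) =
      μ * star (B j k) - if k = i then μ * star (B j i) else 0 := by
    rcases eq_or_ne k i with rfl | hki
    · simp [h.apply_self]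
    · have hki' : a k - a i ≠ 0 := sub_ne_zero.mpr (h.injective.ne hki)
      rw [if_neg hki]
      field_simp
      linear_combination hlink k
  have hBB : ∑ k, B l k * star (B j k) = (1 : Matrix n n ℂ) l j := by
    rw [← mem_unitaryGroup_iff.mp h.unitary]; rfl
  calc (B * B) l i + (a i - a j) * (B * diagonal (fun k => (a k - a i)⁻¹) * B) l i
      = ∑ k, B l k * (B k i + (a i - a j) * ((a k - a i)⁻¹ * B k i)) := by
        simp only [mul_apply (M := B), mul_assoc, diagonal_mul, mul_add, Finset.sum_add_distrib,
          Finset.mul_sum, mul_left_comm (a i - a j)]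
    _ = μ * ∑ k, B l k * star (B j k) - B l i * (μ * star (B j i)) := by
        simp only [hterm, mul_sub, Finset.sum_sub_distrib, Finset.mul_sum, mul_ite, mul_zero,
          Finset.sum_ite_eq', Finset.mem_univ, if_true, mul_left_comm μ]
    _ = _ := by rw [hBB]; ring

lemma exists_sq_apply_of_linked_linked [Nontrivial n] (h : FermatPair a B) {i j j' : n}
    (hj : Linked a B i j) (hj' : Linked a B i j') (hij : i ≠ j) (hij' : i ≠ j') (hjj' : j ≠ j') :
    ∃ α β γ : ℂ, β ≠ 0 ∧ γ ≠ 0 ∧ ∀ l, (B * B) l i =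
      α * B l i + β * (1 : Matrix n n ℂ) l j + γ * (1 : Matrix n n ℂ) l j' := by
  obtain ⟨c, μ, hμ, hsq⟩ := h.exists_sq_apply_of_linked hj
  obtain ⟨c', μ', hμ', hsq'⟩ := h.exists_sq_apply_of_linked hj'
  have hd : a j - a j' ≠ 0 := sub_ne_zero.mpr (h.injective.ne hjj')
  have hdj : a i - a j ≠ 0 := sub_ne_zero.mpr (h.injective.ne hij)
  have hdj' : a i - a j' ≠ 0 := sub_ne_zero.mpr (h.injective.ne hij')
  refine ⟨((a i - a j') * c - (a i - a j) * c') / (a j - a j'), (a i - a j') * μ / (a j - a j'),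
    -((a i - a j) * μ') / (a j - a j'), by positivity, by simp [*], fun l => ?_⟩
  field_simp
  linear_combination (a i - a j') * hsq l - (a i - a j) * hsq' l

lemma apply_eq_zero_of_linked_three [Nontrivial n] (h : FermatPair a B) {i j k l m : n}
    (hj : Linked a B i j) (hk : Linked a B i k) (hl : Linked a B i l) (hjk : j ≠ k) (hjl : j ≠ l)
    (hkl : k ≠ l) (hmj : m ≠ j) (hmk : m ≠ k) (hml : m ≠ l) : B m i = 0 := by
  obtain ⟨cj, μj, hμj, hsqj⟩ := h.exists_sq_apply_of_linked hj
  obtain ⟨ck, μk, -, hsqk⟩ := h.exists_sq_apply_of_linked hk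
  obtain ⟨cl, μl, -, hsql⟩ := h.exists_sq_apply_of_linked hl
  -- These weights annihilate both `1` and `a`, hence the left-hand sides of the three relations.
  set c := (a l - a k) * cj + (a j - a l) * ck + (a k - a j) * cl
  have combine (p : n) : c * B p i + ((a l - a k) * μj * (1 : Matrix n n ℂ) p j +
      (a j - a l) * μk * (1 : Matrix n n ℂ) p k +
      (a k - a j) * μl * (1 : Matrix n n ℂ) p l) = 0 := by
    linear_combination -(a l - a k) * hsqj p - (a j - a l) * hsqk p - (a k - a j) * hsql p
  have hc0 : c ≠ 0 := fun hc0 => by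
    have := combine j
    rw [hc0, one_apply_eq, one_apply_ne hjk, one_apply_ne hjl] at this
    exact mul_ne_zero (sub_ne_zero.mpr (h.injective.ne hkl.symm)) hμj (by linear_combination this)
  have := combine m
  rw [one_apply_ne hmj, one_apply_ne hmk, one_apply_ne hml] at this
  exact (mul_eq_zero.mp (by linear_combination this)).resolve_left hc0

lemma exists_mapsBasis_of_linked_three (hn : Fintype.card n = 5) (h : FermatPair a B)
    {i j k l : n} (hnodup : [i, j, k, l].Nodup) (hj : Linked a B i j) (hk : Linked a B i k)
    (hl : Linked a B i l) : ∃ m, MapsBasis B m i := by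
  have : Nontrivial n := Fintype.one_lt_card_iff_nontrivial.mp (by omega)
  simp only [List.nodup_cons, List.mem_cons, List.not_mem_nil, or_false, not_or] at hnodup
  obtain ⟨⟨hij, hik, hil⟩, ⟨hjk, hjl⟩, hkl, -⟩ := hnodup
  obtain ⟨m, hm⟩ : ∃ m, ({i, j, k, l}ᶜ : Finset n) = {m} := by
    rw [← Finset.card_eq_one, Finset.card_compl, hn, Finset.card_eq_succ.mpr
      ⟨i, {j, k, l}, by simp [*], rfl, Finset.card_eq_three.mpr ⟨j, k, l, hjk, hjl, hkl, rfl⟩⟩]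
  have hm (p : n) : (p ≠ i ∧ p ≠ j ∧ p ≠ k ∧ p ≠ l) ↔ p = m := by
    simpa using Finset.ext_iff.mp hm p
  obtain ⟨hmi, hmj, hmk, hml⟩ := (hm m).mpr rfl
  have hBmi : B m i = 0 := h.apply_eq_zero_of_linked_three hj hk hl hjk hjl hkl hmj hmk hml
  have hlink {p : n} (hp : Linked a B i p) : B p m = 0 := by
    obtain ⟨μ, hμ, hp⟩ := hp
    have := hp m
    rw [hBmi, mul_zero] at this
    simpa [hμ, sub_ne_zero.mpr (h.injective.ne hmi)] using this.symm
  refine ⟨m, fun p hpi => ?_⟩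
  by_cases hp : p = j ∨ p = k ∨ p = l
  · rcases hp with rfl | rfl | rfl
    exacts [hlink hj, hlink hk, hlink hl]
  · rw [(hm p).mp (by tauto), h.apply_self]

end FermatPair

end Links

section Tournament

/-- A relation on five points relating any two of them, without three arrows out of or into a
point: it is a regular tournament. -/
structure IsRegularTournament (r : Fin 5 → Fin 5 → Prop) : Prop where
  total : ∀ i j, i ≠ j → r i j ∨ r j i
  out_le_two : ∀ i j k l, [i, j, k, l].Nodup → r i j → r i k → ¬r i l
  in_le_two : ∀ i j k l, [i, j, k, l].Nodup → r j i → r k i → ¬r l i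

namespace IsRegularTournament

variable {r : Fin 5 → Fin 5 → Prop}

lemma of_out_out (hr : IsRegularTournament r) {i j k l : Fin 5} (hnodup : [i, j, k, l].Nodup)
    (hij : r i j) (hik : r i k) : r l i :=
  (hr.total i l (by grind)).resolve_left (hr.out_le_two i j k l hnodup hij hik)

lemma of_in_in (hr : IsRegularTournament r) {i j k l : Fin 5} (hnodup : [i, j, k, l].Nodup)
    (hji : r j i) (hki : r k i) : r i l :=
  (hr.total i l (by grind)).resolve_right (hr.in_le_two i j k l hnodup hji hki)

lemma exists_out_out (hr : IsRegularTournament r) :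
    ∃ p q : Fin 5, p ≠ q ∧ p ≠ 0 ∧ q ≠ 0 ∧ r 0 p ∧ r 0 q := by
  by_contra! hout
  have htotal (p : Fin 5) (hp : 0 ≠ p) := hr.total 0 p hp
  have hin (p q s : Fin 5) (hnodup : [0, p, q, s].Nodup) := hr.in_le_two 0 p q s hnodup
  have := htotal 1 (by decide)
  have := htotal 2 (by decide)
  have := htotal 3 (by decide)
  have := htotal 4 (by decide)
  have := hin 1 2 3 (by decide)
  have := hin 1 2 4 (by decide)
  have := hin 1 3 4 (by decide)
  have := hin 2 3 4 (by decide)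
  clear htotal hin
  grind

lemma exists_perm (hr : IsRegularTournament r) :
    ∃ e : Equiv.Perm (Fin 5), ∀ i, r (e i) (e (i + 1)) ∧ r (e i) (e (i + 2)) := by
  obtain ⟨p, q, hpq, hp, hq, h0p, h0q⟩ := hr.exists_out_out
  wlog hrpq : r p q generalizing p q
  · exact this q p hpq.symm hq hp h0q h0p ((hr.total p q hpq).resolve_left hrpq)
  obtain ⟨x, y, hnodup, hpx⟩ : ∃ x y, [0, p, q, x, y].Nodup ∧ r p x := by
    obtain ⟨x, y, hnodup⟩ : ∃ x y, [0, p, q, x, y].Nodup := by clear * - hpq hp hq; decide +revert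
    by_cases hpx : r p x
    · exact ⟨x, y, hnodup, hpx⟩
    · exact ⟨y, x, by grind, hr.of_in_in (j := 0) (k := x) (by grind) h0p
        ((hr.total p x (by grind)).resolve_left hpx)⟩
  have h0x : r x 0 := hr.of_out_out (by grind) h0p h0q
  have h0y : r y 0 := hr.of_out_out (by grind) h0p h0q
  have hyp : r y p := hr.of_out_out (by grind) hrpq hpx
  have hqx : r q x := hr.of_in_in (by grind) h0q hrpq
  have hqy : r q y := hr.of_in_in (by grind) h0q hrpq
  have hxy : r x y := hr.of_in_in (by grind) hpx hqx
  have hinj := List.nodup_iff_injective_get.mp hnodup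
  refine ⟨Equiv.ofBijective _ (Finite.injective_iff_bijective.mp hinj), fun i => ?_⟩
  fin_cases i
  exacts [⟨h0p, h0q⟩, ⟨hrpq, hpx⟩, ⟨hqx, hqy⟩, ⟨hxy, h0x⟩, ⟨h0y, hyp⟩]

end IsRegularTournament

end Tournament

section CyclicallyLinked

lemma fin_five_forall_of_add {P : Fin 5 → Prop} {d i₀ : Fin 5} (hd : d ≠ 0) (h₀ : P i₀)
    (hstep : ∀ i, P i → P (i + d)) (i : Fin 5) : P i := by
  have hmultiple : ∃ m : Fin 5, i = i₀ + (m : ℕ) • d := by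
    clear h₀ hstep
    decide +revert
  obtain ⟨m, rfl⟩ := hmultiple
  induction (m : ℕ) with
  | zero => simpa using h₀
  | succ m ih => simpa [succ_nsmul, add_assoc] using hstep _ ih

lemma Linked.apply_eq_zero_iff {n : Type*} {a : n → ℂ} {B : Matrix n n ℂ} {i j k : n}
    (h : Linked a B i j) (ha : Function.Injective a) (hki : k ≠ i) (hkj : k ≠ j) :
    B k i = 0 ↔ B j k = 0 := by
  obtain ⟨μ, hμ, hlink⟩ := h
  have hi : a k - a i ≠ 0 := sub_ne_zero.mpr (ha.ne hki)
  have hj : a k - a j ≠ 0 := sub_ne_zero.mpr (ha.ne hkj)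
  rw [← mul_eq_zero_iff_left hj, hlink k, mul_eq_zero_iff_left (mul_ne_zero hμ hi), star_eq_zero]

/-- The links run along the arrows `i → i + 1`, `i → i + 2` of the regular tournament on five
points. -/
def CyclicallyLinked (a : Fin 5 → ℂ) (B : Matrix (Fin 5) (Fin 5) ℂ) : Prop :=
  ∀ i, Linked a B i (i + 1) ∧ Linked a B i (i + 2)

/-- The matrix sending the `i`-th basis vector to `β i` times the next one plus `γ i` times the
one after it, cyclically. -/
def cyclicBand (β γ : Fin 5 → ℂ) : Matrix (Fin 5) (Fin 5) ℂ :=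
  of fun l i => β i * (1 : Matrix (Fin 5) (Fin 5) ℂ) l (i + 1) +
    γ i * (1 : Matrix (Fin 5) (Fin 5) ℂ) l (i + 2)

namespace FermatPair

variable {a : Fin 5 → ℂ} {B : Matrix (Fin 5) (Fin 5) ℂ}

lemma isRegularTournament_linked (h : FermatPair a B) (hmaps : ∀ i j, ¬MapsBasis B i j) :
    IsRegularTournament (Linked a B) where
  total _ _ hij := h.linked_or_linked le_rfl hmaps hij
  out_le_two i j k l hnodup hj hk hl := by
    obtain ⟨m, hm⟩ := h.exists_mapsBasis_of_linked_three (Fintype.card_fin 5) hnodup hj hk hl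
    exact hmaps m i hm
  in_le_two i j k l hnodup hj hk hl := by
    obtain ⟨m, hm⟩ := h.conjTranspose.exists_mapsBasis_of_linked_three (Fintype.card_fin 5) hnodup
      hj.conjTranspose hk.conjTranspose hl.conjTranspose
    exact hmaps i m (by simpa using hm.conjTranspose h.conjTranspose.unitary)

lemma exists_perm_cyclicallyLinked (h : FermatPair a B) (hmaps : ∀ i j, ¬MapsBasis B i j) :
    ∃ e : Equiv.Perm (Fin 5), CyclicallyLinked (a ∘ e) (B.submatrix e e) := by
  obtain ⟨e, he⟩ := (h.isRegularTournament_linked hmaps).exists_perm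
  refine ⟨e, fun i => ⟨?_, ?_⟩⟩
  · obtain ⟨μ, hμ, hlink⟩ := (he i).1
    exact ⟨μ, hμ, fun k => hlink (e k)⟩
  · obtain ⟨μ, hμ, hlink⟩ := (he i).2
    exact ⟨μ, hμ, fun k => hlink (e k)⟩

-- The links carry a zero in diagonal `3` to all of diagonal `3`, and from there to diagonals `4`
-- and `2`.
lemma apply_add_three_ne_zero (h : FermatPair a B) (hlinked : CyclicallyLinked a B)
    (hmaps : ∀ i j, ¬MapsBasis B i j) (i : Fin 5) : B (i + 3) i ≠ 0 := by
  intro hi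
  have hthree (j : Fin 5) : B (j + 3) j = 0 :=
    fin_five_forall_of_add (P := fun j => B (j + 3) j = 0) (d := 3) (by decide) hi (fun j hj => by
      rw [add_assoc]
      exact ((hlinked j).1.apply_eq_zero_iff h.injective (by simp) (by simp)).mp hj) j
  have hfour (j : Fin 5) : B (j + 4) j = 0 := by
    refine ((hlinked j).2.apply_eq_zero_iff h.injective (by simp) (by simp)).mpr ?_
    simpa [add_assoc] using hthree (j + 4)
  have htwo (j : Fin 5) : B (j + 2) j = 0 := by
    refine ((hlinked j).1.apply_eq_zero_iff h.injective (by simp) (by simp)).mpr ?_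
    simpa [add_assoc] using hfour (j + 2)
  refine hmaps 0 1 fun k hk => ?_
  fin_cases k
  exacts [h.apply_self 0, absurd rfl hk, htwo 0, hthree 0, hfour 0]

lemma apply_add_four_ne_zero (h : FermatPair a B) (hlinked : CyclicallyLinked a B)
    (hmaps : ∀ i j, ¬MapsBasis B i j) (i : Fin 5) : B (i + 4) i ≠ 0 := by
  refine ((hlinked i).2.apply_eq_zero_iff h.injective (by simp) (by simp)).not.mpr ?_
  simpa [add_assoc] using h.apply_add_three_ne_zero hlinked hmaps (i + 4)

lemma apply_add_two_ne_zero (h : FermatPair a B) (hlinked : CyclicallyLinked a B)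
    (hmaps : ∀ i j, ¬MapsBasis B i j) (i : Fin 5) : B (i + 2) i ≠ 0 := by
  refine ((hlinked i).1.apply_eq_zero_iff h.injective (by simp) (by simp)).not.mpr ?_
  simpa [add_assoc] using h.apply_add_four_ne_zero hlinked hmaps (i + 2)

lemma exists_sq_eq_smul_add_cyclicBand (h : FermatPair a B) (hlinked : CyclicallyLinked a B)
    (hmaps : ∀ i j, ¬MapsBasis B i j) :
    ∃ (α : ℂ) (β γ : Fin 5 → ℂ), (∀ i, β i ≠ 0) ∧ (∀ i, γ i ≠ 0) ∧
      B * B = α • B + cyclicBand β γ := by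
  choose α β γ hβ hγ hcol using fun i => h.exists_sq_apply_of_linked_linked (hlinked i).1
    (hlinked i).2 (by simp) (by simp) (by simp)
  choose α' β' γ' _ _ hrow using fun i => h.conjTranspose.exists_sq_apply_of_linked_linked
    (i := i) (j := i + 3) (j' := i + 4)
    (by simpa [add_assoc] using (hlinked (i + 3)).2.conjTranspose)
    (by simpa [add_assoc] using (hlinked (i + 4)).1.conjTranspose) (by simp) (by simp) (by simp)
  have hα (i d : Fin 5) (hd : d = 3 ∨ d = 4) : α i = star (α' (i + d)) := by
    have hBB : star ((Bᴴ * Bᴴ) i (i + d)) = (B * B) (i + d) i := by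
      rw [← conjTranspose_mul, conjTranspose_apply, star_star]
    rw [hrow, hcol] at hBB
    rcases hd with rfl | rfl
    · refine mul_right_cancel₀ (h.apply_add_three_ne_zero hlinked hmaps i) ?_
      simpa [one_apply, add_assoc] using hBB.symm
    · refine mul_right_cancel₀ (h.apply_add_four_ne_zero hlinked hmaps i) ?_
      simpa [one_apply, add_assoc] using hBB.symm
  refine ⟨α 0, β, γ, hβ, hγ, ?_⟩
  have hconst := fin_five_forall_of_add (P := fun i => α i = α 0) (d := 1) (by decide) rfl
    fun i hi => by
      rw [← hi, hα i 4 (Or.inr rfl), hα (i + 1) 3 (Or.inl rfl), add_assoc]; rfl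
  ext l i
  simp only [Matrix.add_apply, Matrix.smul_apply, smul_eq_mul, cyclicBand, of_apply, hcol, hconst]
  ring

end FermatPair

section CyclicBand

variable {β γ : Fin 5 → ℂ}

lemma mul_cyclicBand_apply (M : Matrix (Fin 5) (Fin 5) ℂ) (l i : Fin 5) :
    (M * cyclicBand β γ) l i = β i * M l (i + 1) + γ i * M l (i + 2) := by
  simp [mul_apply, cyclicBand, one_apply, mul_add, Finset.sum_add_distrib, mul_comm]

lemma cyclicBand_mul_apply (M : Matrix (Fin 5) (Fin 5) ℂ) (l i : Fin 5) :
    (cyclicBand β γ * M) (l + 2) i = β (l + 1) * M (l + 1) i + γ l * M l i := by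
  have hone (k : Fin 5) : l + 2 = k + 1 ↔ k = l + 1 := by decide +revert
  simp [mul_apply, cyclicBand, one_apply, hone, add_mul, Finset.sum_add_distrib]

lemma exists_gauge (h₀ : β 0 ≠ 0) (hβ : ∀ i, ‖β i‖ = ‖β 0‖) :
    ∃ (b : ℂ) (p : Fin 5 → ℂ), (∀ i, star (p i) * p i = 1) ∧
      ∀ i, star (p (i + 1)) * β i * p i = b := by
  obtain ⟨b, hb⟩ := IsAlgClosed.exists_pow_nat_eq (∏ i, β i) (n := 5) (by norm_num)
  have hnorm : ‖b‖ = ‖β 0‖ := by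
    refine (pow_left_inj₀ (norm_nonneg _) (norm_nonneg _) (n := 5) (by norm_num)).mp ?_
    rw [← norm_pow, hb, norm_prod, Finset.prod_congr rfl fun i _ => hβ i]
    simp
  have hb0 : b ≠ 0 := norm_ne_zero_iff.mp (hnorm ▸ norm_ne_zero_iff.mpr h₀)
  let p : Fin 5 → ℂ := fun i => ∏ j with j < i, β j / b
  have hp (i : Fin 5) : star (p i) * p i = 1 := by
    have : ‖p i‖ = 1 := by
      rw [norm_prod]
      refine Finset.prod_eq_one fun j _ => ?_
      rw [norm_div, hβ, hnorm, div_self (norm_ne_zero_iff.mpr h₀)]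
    simp [conj_mul', this]
  refine ⟨b, p, hp, fun i => ?_⟩
  have hstep : β i * p i = p (i + 1) * b := by
    simp only [p, Finset.prod_filter]
    fin_cases i <;> simp [Fin.prod_univ_five] <;> field_simp
    rw [hb, Fin.prod_univ_five]
    ring
  rw [mul_assoc, hstep, ← mul_assoc, hp, one_mul]

/-- `B` is unitary with zero diagonal, and `B * B` is a combination of `B` and two cyclic diagonals
with nonzero entries. -/
structure IsBandUnitary (B : Matrix (Fin 5) (Fin 5) ℂ) (α : ℂ) (β γ : Fin 5 → ℂ) : Prop where
  unitary : B ∈ unitaryGroup (Fin 5) ℂ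
  apply_self : ∀ i, B i i = 0
  sq_eq : B * B = α • B + cyclicBand β γ
  left_ne_zero : ∀ i, β i ≠ 0
  right_ne_zero : ∀ i, γ i ≠ 0

namespace IsBandUnitary

variable {B : Matrix (Fin 5) (Fin 5) ℂ} {α : ℂ}

lemma eq_conjTranspose_mul (h : IsBandUnitary B α β γ) : B = α • 1 + Bᴴ * cyclicBand β γ := by
  have hBB : Bᴴ * B = 1 := mem_unitaryGroup_iff'.mp h.unitary
  have := congrArg (Bᴴ * ·) h.sq_eq
  simpa [mul_add, ← mul_assoc, hBB] using this

lemma eq_mul_conjTranspose (h : IsBandUnitary B α β γ) : B = α • 1 + cyclicBand β γ * Bᴴ := by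
  have hBB : B * Bᴴ = 1 := mem_unitaryGroup_iff.mp h.unitary
  have := congrArg (· * Bᴴ) h.sq_eq
  simpa [add_mul, mul_assoc, hBB] using this

lemma apply_eq (h : IsBandUnitary B α β γ) (l i : Fin 5) :
    B l i = α * (1 : Matrix (Fin 5) (Fin 5) ℂ) l i + β i * star (B (i + 1) l) +
      γ i * star (B (i + 2) l) := by
  conv_lhs => rw [h.eq_conjTranspose_mul]
  simp [mul_cyclicBand_apply, add_assoc]

lemma apply_add_two_eq (h : IsBandUnitary B α β γ) (l i : Fin 5) :
    B (l + 2) i = α * (1 : Matrix (Fin 5) (Fin 5) ℂ) (l + 2) i + β (l + 1) * star (B i (l + 1)) +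
      γ l * star (B i l) := by
  conv_lhs => rw [h.eq_mul_conjTranspose]
  simp [cyclicBand_mul_apply, add_assoc]

lemma conjTranspose_mul_cyclicBand (h : IsBandUnitary B α β γ) :
    (cyclicBand β γ)ᴴ * cyclicBand β γ = (1 + star α * α) • 1 - α • Bᴴ - star α • B := by
  have hBB : Bᴴ * B = 1 := mem_unitaryGroup_iff'.mp h.unitary
  have hband : cyclicBand β γ = B * (B - α • 1) := by
    rw [mul_sub, h.sq_eq, mul_smul_comm, mul_one, add_sub_cancel_left]
  rw [hband, conjTranspose_mul, mul_assoc, ← mul_assoc Bᴴ, hBB, one_mul]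
  simp [sub_mul, mul_sub, hBB, add_smul, mul_smul]
  module

lemma cyclicBand_mul_conjTranspose (h : IsBandUnitary B α β γ) :
    cyclicBand β γ * (cyclicBand β γ)ᴴ = (1 + star α * α) • 1 - α • Bᴴ - star α • B := by
  have hBB' : B * Bᴴ = 1 := mem_unitaryGroup_iff.mp h.unitary
  have hband : cyclicBand β γ = (B - α • 1) * B := by
    rw [sub_mul, h.sq_eq, smul_mul_assoc, one_mul, add_sub_cancel_left]
  rw [hband, conjTranspose_mul, mul_assoc, ← mul_assoc B, hBB', one_mul]
  simp [sub_mul, mul_sub, hBB', add_smul, mul_smul]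
  module

lemma star_mul_left_add (h : IsBandUnitary B α β γ) (i : Fin 5) :
    star (β i) * β i + star (γ i) * γ i = 1 + star α * α := by
  have := congrFun (congrFun h.conjTranspose_mul_cyclicBand i) i
  rw [mul_cyclicBand_apply] at this
  simpa [cyclicBand, one_apply, h.apply_self, mul_comm] using this

lemma star_mul_left_add' (h : IsBandUnitary B α β γ) (i : Fin 5) :
    star (β (i + 1)) * β (i + 1) + star (γ i) * γ i = 1 + star α * α := by
  have := congrFun (congrFun h.cyclicBand_mul_conjTranspose (i + 2)) (i + 2)
  rw [cyclicBand_mul_apply] at this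
  simpa [cyclicBand, one_apply, h.apply_self, add_assoc, mul_comm] using this

lemma star_right_mul_left (h : IsBandUnitary B α β γ) (i : Fin 5) :
    star (γ (i + 2)) * β (i + 3) = star (γ (i + 1)) * β (i + 1) := by
  have hentry := congrFun (congrFun
    (h.conjTranspose_mul_cyclicBand.trans h.cyclicBand_mul_conjTranspose.symm) (i + 2)) (i + 3)
  rw [mul_cyclicBand_apply, cyclicBand_mul_apply] at hentry
  simpa [cyclicBand, one_apply, add_assoc, mul_comm] using hentry

lemma norm_left_eq (h : IsBandUnitary B α β γ) (i : Fin 5) : ‖β i‖ = ‖β 0‖ := by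
  refine fin_five_forall_of_add (P := fun i => ‖β i‖ = ‖β 0‖) (d := 1) (by decide) rfl
    (fun i hi => ?_) i
  have hsq := (h.star_mul_left_add' i).trans (h.star_mul_left_add i).symm
  simp only [star_def, conj_mul', add_left_inj] at hsq
  rw [← hi, ← sq_eq_sq₀ (norm_nonneg _) (norm_nonneg _)]
  exact_mod_cast hsq

lemma conj (h : IsBandUnitary B α β γ) {p : Fin 5 → ℂ} (hp : ∀ i, star (p i) * p i = 1) :
    IsBandUnitary ((diagonal p)ᴴ * B * diagonal p) α (fun i => star (p (i + 1)) * β i * p i)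
      (fun i => star (p (i + 2)) * γ i * p i) := by
  have hp' (i : Fin 5) : p i ≠ 0 := right_ne_zero_of_mul_eq_one (hp i)
  have hp'' (i : Fin 5) : star (p i) ≠ 0 := left_ne_zero_of_mul_eq_one (hp i)
  have hD : diagonal p ∈ unitaryGroup (Fin 5) ℂ := by
    rw [mem_unitaryGroup_iff', star_eq_conjTranspose, diagonal_conjTranspose, diagonal_mul_diagonal,
      ← diagonal_one]
    exact congrArg diagonal (funext hp)
  refine ⟨mul_mem (mul_mem (Unitary.star_mem hD) h.unitary) hD, fun i => ?_, ?_,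
    fun i => mul_ne_zero (mul_ne_zero (hp'' _) (h.left_ne_zero i)) (hp' i),
    fun i => mul_ne_zero (mul_ne_zero (hp'' _) (h.right_ne_zero i)) (hp' i)⟩
  · simp [diagonal_conjTranspose, h.apply_self]
  · have hDD : diagonal p * (diagonal p)ᴴ = 1 := mem_unitaryGroup_iff.mp hD
    calc (diagonal p)ᴴ * B * diagonal p * ((diagonal p)ᴴ * B * diagonal p)
        = (diagonal p)ᴴ * B * (diagonal p * (diagonal p)ᴴ) * B * diagonal p := by noncomm_ring
      _ = (diagonal p)ᴴ * (B * B) * diagonal p := by rw [hDD]; noncomm_ring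
      _ = α • ((diagonal p)ᴴ * B * diagonal p) + (diagonal p)ᴴ * cyclicBand β γ * diagonal p := by
        rw [h.sq_eq, mul_add, add_mul, mul_smul_comm, smul_mul_assoc]
      _ = _ := by
        congr 1
        ext l i
        simp only [diagonal_conjTranspose, mul_diagonal, diagonal_mul, cyclicBand, of_apply,
          one_apply, Pi.star_apply]
        split_ifs <;> simp_all

lemma right_eq_of_const {b : ℂ} (h : IsBandUnitary B α (fun _ => b) γ) (i : Fin 5) :
    γ i = γ 0 := by
  refine fin_five_forall_of_add (P := fun i => γ i = γ 0) (d := 1) (by decide) rfl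
    (fun i hi => ?_) i
  have := star_injective (mul_right_cancel₀ (h.left_ne_zero 0) (h.star_right_mul_left (i + 4)))
  rw [← hi]
  simpa [add_assoc] using this

lemma apply_add_one_of_const {b : ℂ} (h : IsBandUnitary B α (fun _ => b) γ) (i j : Fin 5) :
    B (i + 1) (j + 1) = B i j := by
  have hγ := h.right_eq_of_const
  have hb : b ≠ 0 := h.left_ne_zero 0
  have hc : γ 0 ≠ 0 := h.right_ne_zero 0
  have hone (i : Fin 5) : B (i + 1) i = B 1 0 := by
    refine fin_five_forall_of_add (P := fun i => B (i + 1) i = B 1 0) (i₀ := 0) (d := 2)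
      (by decide) rfl (fun i hi => ?_) i
    have h1 : B (i + 1) i = γ 0 * star (B (i + 2) (i + 1)) := by
      simpa [one_apply, h.apply_self, hγ, add_assoc] using h.apply_eq (i + 1) i
    have h2 : B (i + 3) (i + 2) = γ 0 * star (B (i + 2) (i + 1)) := by
      simpa [one_apply, h.apply_self, hγ, add_assoc] using h.apply_add_two_eq (i + 1) (i + 2)
    rw [← hi, h1, ← h2, add_assoc]
    rfl
  have htwo (i : Fin 5) : B (i + 2) i = B 2 0 := by
    have h1 := h.apply_eq i i
    have h2 := h.apply_eq 0 0
    simp only [h.apply_self, one_apply_eq, hone, hγ i] at h1 h2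
    exact star_injective (mul_left_cancel₀ hc (add_left_cancel (h1.symm.trans h2)))
  have hfour (i : Fin 5) : B (i + 4) i = B 4 0 := by
    have key (i : Fin 5) : B 2 0 = b * star (B (i + 4) i) := by
      rw [← htwo (i + 3)]
      simpa [one_apply, h.apply_self, add_assoc] using h.apply_eq (i + 3 + 2) (i + 3)
    exact star_injective (mul_left_cancel₀ hb ((key i).symm.trans (key 0)))
  have hthree (i : Fin 5) : B (i + 3) i = B 3 0 := by
    have key (i : Fin 5) : B 4 0 = b * star (B 2 0) + γ 0 * star (B (i + 3) i) := by
      rw [← hfour (i + 1)]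
      simpa [one_apply, htwo, hγ, add_assoc] using h.apply_eq (i + 1 + 4) (i + 1)
    exact star_injective (mul_left_cancel₀ hc (add_left_cancel ((key i).symm.trans (key 0))))
  have hdiag (d i : Fin 5) : B (i + d) i = B d 0 := by
    fin_cases d
    exacts [by simp [h.apply_self], hone i, htwo i, hthree i, hfour i]
  have hij : i = j + (i - j) := (add_sub_cancel j i).symm
  rw [hij, add_right_comm, hdiag, hdiag]

lemma exists_conj_diagonal_apply_add_one (h : IsBandUnitary B α β γ) :
    ∃ p : Fin 5 → ℂ, (∀ i, star (p i) * p i = 1) ∧ ∀ i j, star (p (i + 1)) * B (i + 1) (j + 1) *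
      p (j + 1) = star (p i) * B i j * p j := by
  obtain ⟨b, p, hp, hb⟩ := exists_gauge (h.left_ne_zero 0) h.norm_left_eq
  have hconst := h.conj hp
  simp only [hb] at hconst
  refine ⟨p, hp, fun i j => ?_⟩
  simpa [diagonal_conjTranspose] using hconst.apply_add_one_of_const i j

end IsBandUnitary

end CyclicBand

end CyclicallyLinked

section Moments

variable {n : Type*} [Fintype n] [DecidableEq n] {a : n → ℂ} {B : Matrix n n ℂ}

namespace FermatPair

lemma exists_apply_eq [Nonempty n] (h : FermatPair a B) {z : ℂ} (hz : z ^ Fintype.card n = 1) :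
    ∃ k, a k = z := by
  have hmem {w : ℂ} : w ∈ Polynomial.nthRootsFinset (Fintype.card n) 1 ↔
      w ^ Fintype.card n = 1 := Polynomial.mem_nthRootsFinset Fintype.card_pos 1
  have himage : Finset.univ.image a = Polynomial.nthRootsFinset (Fintype.card n) (1 : ℂ) := by
    refine Finset.eq_of_subset_of_card_le (fun w hw => ?_) ?_
    · obtain ⟨k, -, rfl⟩ := Finset.mem_image.mp hw
      exact hmem.mpr (h.pow_card k)
    · rw [Finset.card_image_of_injective _ h.injective, Finset.card_univ]
      exact (Multiset.toFinset_card_le _).trans (Polynomial.card_nthRoots _ _)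
  obtain ⟨k, -, hk⟩ := Finset.mem_image.mp (himage.symm ▸ hmem.mpr hz)
  exact ⟨k, hk⟩

-- Pair `k` with the index `s k` of the reflected root `a i ^ 2 / a k`.
lemma sum_inv_sub [Nonempty n] (h : FermatPair a B) (i : n) :
    2 * ∑ k, (a k - a i)⁻¹ = -((Fintype.card n : ℂ) - 1) / a i := by
  have hi := h.ne_zero i
  choose s hs using fun k => h.exists_apply_eq (z := a i ^ 2 / a k) (by
    rw [div_pow, h.pow_card, ← pow_mul, mul_comm, pow_mul, h.pow_card, one_pow, div_one])
  have hinj : Function.Injective s := fun k l hkl => h.injective <| by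
    have := (hs k).symm.trans ((congrArg a hkl).trans (hs l))
    have hk := h.ne_zero k
    have hl := h.ne_zero l
    field_simp at this
    exact this.symm
  have hpair (k : n) : (a k - a i)⁻¹ + (a (s k) - a i)⁻¹ =
      -(a i)⁻¹ + if k = i then (a i)⁻¹ else 0 := by
    rcases eq_or_ne k i with rfl | hk
    · simp [hs, sq]
    · have hki : a k - a i ≠ 0 := sub_ne_zero.mpr (h.injective.ne hk)
      have hk0 := h.ne_zero k
      have hsk : a (s k) - a i = -(a i * (a k - a i) / a k) := by
        rw [hs]
        field_simp
        ring
      rw [if_neg hk, hsk]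
      field_simp
      ring
  have hsum : ∑ k, (a (s k) - a i)⁻¹ = ∑ k, (a k - a i)⁻¹ :=
    (Finite.injective_iff_bijective.mp hinj).sum_comp fun k => (a k - a i)⁻¹
  rw [two_mul]
  nth_rewrite 2 [← hsum]
  rw [← Finset.sum_add_distrib, Finset.sum_congr rfl fun k _ => hpair k]
  simp [Finset.sum_add_distrib]
  ring

lemma sum_mul_add_mul_sum_inv_sub [Nontrivial n] (h : FermatPair a B) {i j : n} (hij : i ≠ j) :
    ∑ k, B i k * B k i + (a i - a j) * ∑ k, (a k - a i)⁻¹ * (B i k * B k i) = 0 := by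
  rw [← h.moments i j hij 1, pow_one, ← mul_assoc, mul_apply, Finset.mul_sum,
    ← Finset.sum_add_distrib]
  refine Finset.sum_congr rfl fun k _ => ?_
  rcases eq_or_ne k i with rfl | hk
  · simp [h.apply_self]
  · have := sub_ne_zero.mpr (h.injective.ne hk)
    rw [mul_diagonal, mobius]
    field_simp
    ring

lemma sum_mul_eq_zero_and (h : FermatPair a B) (hn : 2 < Fintype.card n) (i : n) :
    ∑ k, B i k * B k i = 0 ∧ ∑ k, (a k - a i)⁻¹ * (B i k * B k i) = 0 := by
  have : Nontrivial n := Fintype.one_lt_card_iff_nontrivial.mp (by omega)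
  obtain ⟨j, hj, j', hj', hjj'⟩ := Finset.one_lt_card.mp
    (show 1 < ({i}ᶜ : Finset n).card by
      rw [Finset.card_compl, Finset.card_singleton]; omega)
  simp only [Finset.mem_compl, Finset.mem_singleton] at hj hj'
  have h1 := h.sum_mul_add_mul_sum_inv_sub (Ne.symm hj)
  have h2 := h.sum_mul_add_mul_sum_inv_sub (Ne.symm hj')
  have hzero : ∑ k, (a k - a i)⁻¹ * (B i k * B k i) = 0 :=
    (mul_eq_zero.mp (by linear_combination h1 - h2)).resolve_left
      (sub_ne_zero.mpr (h.injective.ne hjj'.symm))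
  exact ⟨by simpa [hzero] using h1, hzero⟩

end FermatPair

end Moments

section Geometric

variable {a : Fin 5 → ℂ} {B : Matrix (Fin 5) (Fin 5) ℂ}

namespace FermatPair

lemma apply_add_one_mul_apply_add_four (h : FermatPair a B)
    (hshift : ∀ i j, B (i + 1) (j + 1) * B (j + 1) (i + 1) = B i j * B j i)
    (hne : ∀ i, B i (i + 2) * B (i + 2) i ≠ 0) (i : Fin 5) : a (i + 1) * a (i + 4) = a i ^ 2 := by
  have hsum (g : Fin 5 → ℂ) : ∑ k, g k = g i + g (i + 1) + g (i + 2) + g (i + 3) + g (i + 4) := by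
    rw [← Equiv.sum_comp (Equiv.addLeft i), Fin.sum_univ_five]
    simp
  obtain ⟨hw, hg⟩ := h.sum_mul_eq_zero_and (by decide) i
  have hT := h.sum_inv_sub i
  have hne' (d : Fin 5) (hd : d ≠ 0) : a (i + d) - a i ≠ 0 :=
    sub_ne_zero.mpr (h.injective.ne (by simpa using hd))
  have h1 := hne' 1 (by decide)
  have h4 := hne' 4 (by decide)
  have h40 : B i (i + 4) * B (i + 4) i = B i (i + 1) * B (i + 1) i := by
    rw [mul_comm, ← hshift]
    simp [add_assoc]
  have h30 : B i (i + 3) * B (i + 3) i = B i (i + 2) * B (i + 2) i := by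
    rw [mul_comm, ← hshift, ← hshift]
    simp [add_assoc]
  rw [hsum, h40, h30, h.apply_self] at hw hg
  rw [hsum] at hT
  have hinv : (a (i + 1) - a i)⁻¹ + (a (i + 4) - a i)⁻¹ =
      (a (i + 2) - a i)⁻¹ + (a (i + 3) - a i)⁻¹ := by
    refine mul_left_cancel₀ (hne i) ?_
    linear_combination ((a (i + 1) - a i)⁻¹ + (a (i + 4) - a i)⁻¹) / 2 * hw - hg
  have hfinal : (a (i + 1) - a i)⁻¹ + (a (i + 4) - a i)⁻¹ = -(a i)⁻¹ := by
    rw [sub_self, _root_.inv_zero, Fintype.card_fin] at hT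
    push_cast at hT
    linear_combination hT / 4 + hinv / 2
  have hi := h.ne_zero i
  field_simp at hfinal
  linear_combination hfinal

lemma apply_add_one_eq_mul (h : FermatPair a B)
    (hgeom : ∀ i, a (i + 1) * a (i + 4) = a i ^ 2) (i : Fin 5) : a (i + 1) = a 1 / a 0 * a i := by
  refine fin_five_forall_of_add (P := fun i => a (i + 1) = a 1 / a 0 * a i) (i₀ := 0) (d := 1)
    (by decide) ?_ (fun i hi => ?_) i
  · simp [h.ne_zero 0]
  · have := hgeom (i + 1)
    rw [add_assoc i 1 4, show (1 + 4 : Fin 5) = 0 from rfl, add_zero] at this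
    refine mul_right_cancel₀ (h.ne_zero i) (this.trans ?_)
    rw [hi]
    ring

lemma sum_pow_eq_zero (h : FermatPair a B) (hstep : ∀ i, a (i + 1) = a 1 / a 0 * a i)
    {k : ℕ} (hk : ¬5 ∣ k) : ∑ i, a i ^ k = 0 := by
  have hq5 : (a 1 / a 0) ^ 5 = 1 := by
    rw [div_pow, show a 1 ^ 5 = 1 from h.pow_card 1, show a 0 ^ 5 = 1 from h.pow_card 0, div_one]
  have hq : (a 1 / a 0) ^ k ≠ 1 := fun hqk => by
    have hcoprime : Nat.gcd 5 k = 1 := (Nat.Prime.coprime_iff_not_dvd Nat.prime_five).mpr hk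
    have hq1 : a 1 / a 0 = 1 := by simpa [hcoprime] using pow_gcd_eq_one.mpr ⟨hq5, hqk⟩
    exact h.injective.ne (by decide : (1 : Fin 5) ≠ 0) ((div_eq_one_iff_eq (h.ne_zero 0)).mp hq1)
  have hsum : ∑ i, a i ^ k = (a 1 / a 0) ^ k * ∑ i, a i ^ k := by
    conv_lhs => rw [← Equiv.sum_comp (Equiv.addRight 1)]
    simp only [Equiv.coe_addRight, hstep, mul_pow, Finset.mul_sum]
  exact (mul_eq_zero.mp (by linear_combination hsum)).resolve_left (sub_ne_zero.mpr hq.symm)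

end FermatPair

end Geometric

section Eigenbasis

/-- The vectors `X ^ k *ᵥ f`, `k < n`, for a suitable `f`, are eigenvectors of `Y`; they are
orthonormal if moreover `X` is unitary with `X ^ n = 1`. -/
def HasCyclicEigenbasis {n : ℕ} (X Y : Matrix (Fin n) (Fin n) ℂ) : Prop :=
  ∃ f : Fin n → ℂ, (∀ k < n, star f ⬝ᵥ (X ^ k *ᵥ f) = if k = 0 then 1 else 0) ∧
    ∀ k < n, ∃ c : ℂ, Y *ᵥ (X ^ k *ᵥ f) = c • (X ^ k *ᵥ f)

lemma HasCyclicEigenbasis.conj {n : ℕ} {X Y : Matrix (Fin n) (Fin n) ℂ}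
    (h : HasCyclicEigenbasis X Y) {V : Matrix (Fin n) (Fin n) ℂ} (hV : V ∈ unitaryGroup (Fin n) ℂ) :
    HasCyclicEigenbasis (V * X * Vᴴ) (V * Y * Vᴴ) := by
  obtain ⟨f, horth, heig⟩ := h
  have hVV : Vᴴ * V = 1 := mem_unitaryGroup_iff'.mp hV
  have hpow (k : ℕ) : (V * X * Vᴴ) ^ k *ᵥ (V *ᵥ f) = V *ᵥ (X ^ k *ᵥ f) := by
    have hsemi : SemiconjBy V X (V * X * Vᴴ) := by
      rw [SemiconjBy, mul_assoc, hVV, mul_one]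
    rw [mulVec_mulVec, mulVec_mulVec, (hsemi.pow_right k).eq]
  refine ⟨V *ᵥ f, fun k hk => ?_, fun k hk => ?_⟩
  · rw [hpow, star_mulVec, dotProduct_mulVec, vecMul_vecMul, hVV, vecMul_one, horth k hk]
  · obtain ⟨c, hc⟩ := heig k hk
    refine ⟨c, ?_⟩
    rw [hpow, mulVec_mulVec, mul_assoc, hVV, mul_one, ← mulVec_mulVec, hc, mulVec_smul]

lemma HasCyclicEigenbasis.of_submatrix {n : ℕ} {X Y : Matrix (Fin n) (Fin n) ℂ}
    {e : Equiv.Perm (Fin n)} (h : HasCyclicEigenbasis (X.submatrix e e) (Y.submatrix e e)) :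
    HasCyclicEigenbasis X Y := by
  set V : Matrix (Fin n) (Fin n) ℂ := submatrix 1 id e with hV
  have hunitary : V ∈ unitaryGroup (Fin n) ℂ := by
    rw [mem_unitaryGroup_iff, star_eq_conjTranspose, hV, conjTranspose_submatrix,
      conjTranspose_one, submatrix_mul_equiv, mul_one, submatrix_id_id]
  have hconj (M : Matrix (Fin n) (Fin n) ℂ) : V * M.submatrix e e * Vᴴ = M := by
    rw [hV, conjTranspose_submatrix, conjTranspose_one, submatrix_mul_equiv, submatrix_mul_equiv,
      one_mul, mul_one, submatrix_id_id]
  simpa only [hconj] using h.conj hunitary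

section

variable {a p : Fin 5 → ℂ} {B : Matrix (Fin 5) (Fin 5) ℂ}

lemma exists_mulVec_pow_mul_eq_smul (ha : a 0 ≠ 0) (hstep : ∀ i, a (i + 1) = a 1 / a 0 * a i)
    (hp : ∀ i, star (p i) * p i = 1) (hB : ∀ i j, star (p (i + 1)) * B (i + 1) (j + 1) *
      p (j + 1) = star (p i) * B i j * p j) (k : ℕ) :
    ∃ c : ℂ, B *ᵥ (fun i => a i ^ k * p i) = c • fun i => a i ^ k * p i := by
  set v : Fin 5 → ℂ := fun i => ∑ j, star (p i) * B i j * p j * a j ^ k with hv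
  have hvstep (i : Fin 5) : v (i + 1) = (a 1 / a 0) ^ k * v i := by
    simp only [hv]
    rw [← Equiv.sum_comp (Equiv.addRight 1)]
    simp only [Equiv.coe_addRight, hstep, mul_pow, hB, Finset.mul_sum, mul_left_comm]
  have hvpow (i : Fin 5) : v i = v 0 / a 0 ^ k * a i ^ k := by
    refine fin_five_forall_of_add (P := fun i => v i = v 0 / a 0 ^ k * a i ^ k) (i₀ := 0) (d := 1)
      (by decide) ?_ (fun i hi => ?_) i
    · simp [ha]
    · rw [hvstep, hi, hstep, mul_pow]
      ring
  refine ⟨v 0 / a 0 ^ k, funext fun i => ?_⟩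
  calc (B *ᵥ fun i => a i ^ k * p i) i
      = star (p i) * p i * ∑ j, B i j * (a j ^ k * p j) := by rw [hp, one_mul]; rfl
    _ = v i * p i := by
      rw [hv, Finset.mul_sum, Finset.sum_mul]
      exact Finset.sum_congr rfl fun j _ => by ring
    _ = _ := by rw [hvpow, mul_assoc]; rfl

lemma hasCyclicEigenbasis_diagonal (ha : a 0 ≠ 0) (hstep : ∀ i, a (i + 1) = a 1 / a 0 * a i)
    (hsum : ∀ k, ¬5 ∣ k → ∑ i, a i ^ k = 0) (hp : ∀ i, star (p i) * p i = 1)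
    (hB : ∀ i j, star (p (i + 1)) * B (i + 1) (j + 1) * p (j + 1) = star (p i) * B i j * p j) :
    HasCyclicEigenbasis (diagonal a) B := by
  set r : ℂ := ((√5 : ℝ) : ℂ) with hr
  have hrr : r * r = 5 := by
    rw [hr, ← ofReal_mul, Real.mul_self_sqrt (by norm_num)]
    norm_num
  have hstar : star r = r := conj_ofReal _
  have hr0 : r ≠ 0 := left_ne_zero_of_mul (hrr.symm ▸ by norm_num : r * r ≠ 0)
  have hpow (k : ℕ) : diagonal a ^ k *ᵥ (r⁻¹ • p) = r⁻¹ • fun i => a i ^ k * p i := by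
    ext i
    simp [diagonal_pow, mulVec_diagonal, mul_left_comm]
  refine ⟨r⁻¹ • p, fun k hk => ?_, fun k _ => ?_⟩
  · have hentry (i : Fin 5) : star (r⁻¹ * p i) * (r⁻¹ * (a i ^ k * p i)) = a i ^ k / 5 := by
      rw [star_mul', star_inv₀, hstar, ← hrr]
      field_simp
      linear_combination a i ^ k * hp i
    simp only [hpow, dotProduct, Pi.star_apply, Pi.smul_apply, smul_eq_mul, hentry,
      ← Finset.sum_div]
    rcases eq_or_ne k 0 with rfl | hk0
    · simp
    · rw [hsum k (Nat.not_dvd_of_pos_of_lt (by omega) hk), if_neg hk0, zero_div]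
  · obtain ⟨c, hc⟩ := exists_mulVec_pow_mul_eq_smul ha hstep hp hB k
    exact ⟨c, by rw [hpow, mulVec_smul, hc, smul_comm]⟩

end

lemma FermatPair.hasCyclicEigenbasis_of_cyclicallyLinked {a : Fin 5 → ℂ}
    {B : Matrix (Fin 5) (Fin 5) ℂ} (h : FermatPair a B) (hlinked : CyclicallyLinked a B)
    (hmaps : ∀ i j, ¬MapsBasis B i j) : HasCyclicEigenbasis (diagonal a) B := by
  obtain ⟨α, β, γ, hβ, hγ, hsq⟩ := h.exists_sq_eq_smul_add_cyclicBand hlinked hmaps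
  obtain ⟨p, hp, hshift⟩ := IsBandUnitary.exists_conj_diagonal_apply_add_one
    ⟨h.unitary, h.apply_self, hsq, hβ, hγ⟩
  have hmul (i j : Fin 5) : star (p i) * B i j * p j * (star (p j) * B j i * p i) =
      B i j * B j i := by
    linear_combination (star (p j) * p j * B i j * B j i) * hp i + B i j * B j i * hp j
  have hstep := h.apply_add_one_eq_mul (h.apply_add_one_mul_apply_add_four
    (fun i j => by rw [← hmul, hshift, hshift, hmul])
    (fun i => mul_ne_zero (by
      simpa [add_assoc] using h.apply_add_three_ne_zero hlinked hmaps (i + 2))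
      (h.apply_add_two_ne_zero hlinked hmaps i)))
  exact hasCyclicEigenbasis_diagonal (h.ne_zero 0) hstep (fun k => h.sum_pow_eq_zero hstep) hp
    hshift

lemma FermatPair.hasCyclicEigenbasis_of_not_mapsBasis {a : Fin 5 → ℂ}
    {B : Matrix (Fin 5) (Fin 5) ℂ} (h : FermatPair a B) (hmaps : ∀ i j, ¬MapsBasis B i j) :
    HasCyclicEigenbasis (diagonal a) B := by
  obtain ⟨e, he⟩ := h.exists_perm_cyclicallyLinked hmaps
  have hmaps' (i j : Fin 5) : ¬MapsBasis (B.submatrix e e) i j := fun hij =>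
    hmaps (e i) (e j) fun k hk => by
      simpa using hij (e.symm k) (by rwa [ne_eq, Equiv.symm_apply_eq])
  have := (h.submatrix e).hasCyclicEigenbasis_of_cyclicallyLinked he hmaps'
  rw [← submatrix_diagonal_equiv] at this
  exact this.of_submatrix

end Eigenbasis

section Monomial

lemma sum_eq_of_nodup {i j k l m : Fin 5} (hnodup : [i, j, k, l, m].Nodup) (f : Fin 5 → ℂ) :
    ∑ p, f p = f i + f j + f k + f l + f m := by
  have huniv : [i, j, k, l, m].toFinset = Finset.univ :=
    Finset.eq_univ_of_card _ (List.toFinset_card_of_nodup hnodup)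
  rw [← huniv, List.sum_toFinset f hnodup]
  simp [add_assoc]

namespace MapsBasis

variable {n : Type*} [Fintype n] {M N : Matrix n n ℂ} {i j k : n}

lemma mul_apply (h : MapsBasis N i j) (l : n) : (M * N) l i = M l j * N j i :=
  (Fintype.sum_eq_single j fun p hp => by simp [h p hp])

lemma mul (hM : MapsBasis M j k) (hN : MapsBasis N i j) : MapsBasis (M * N) i k := fun l hl => by
  rw [hN.mul_apply, hM l hl, zero_mul]

lemma diagonal_mul [DecidableEq n] (h : MapsBasis N i j) (d : n → ℂ) :
    MapsBasis (diagonal d * N) i j := fun k hk => by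
  rw [Matrix.diagonal_mul, h k hk, mul_zero]

end MapsBasis

namespace FermatPair

section

variable {n : Type*} [Fintype n] [DecidableEq n] {a : n → ℂ} {B : Matrix n n ℂ} {i j k q : n}

lemma sum_mul_mobius_mul_eq_zero_of_pow (h : FermatPair a B) (hiq : i ≠ q) {m : ℕ}
    (hmaps : MapsBasis ((diagonal (mobius a i q) * B) ^ m) i j)
    (hne : ((diagonal (mobius a i q) * B) ^ m) j i ≠ 0) :
    ∑ k, B i k * mobius a i q k * B k j = 0 := by
  have := h.moments i q hiq (m + 1)
  rw [pow_succ', ← mul_assoc, hmaps.mul_apply, ← mul_assoc] at this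
  simpa only [Matrix.mul_apply (M := B * _), mul_diagonal] using
    (mul_eq_zero.mp this).resolve_right hne

lemma mobius_mul_ne_zero (h : FermatPair a B) (hij : MapsBasis B i j) (hji : j ≠ i) (hjq : j ≠ q) :
    (diagonal (mobius a i q) * B) j i ≠ 0 := by
  rw [diagonal_mul]
  exact mul_ne_zero (h.mobius_ne_zero hji hjq) (hij.apply_ne_zero h.unitary)

lemma ne_of_mapsBasis [Nontrivial n] (h : FermatPair a B) (hij : MapsBasis B i j) : j ≠ i :=
  fun hji => hij.apply_ne_zero h.unitary (hji ▸ h.apply_self j)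

lemma sum_mul_mobius_mul_eq_zero [Nontrivial n] (h : FermatPair a B) (hij : MapsBasis B i j)
    (hiq : i ≠ q) (hjq : j ≠ q) : ∑ k, B i k * mobius a i q k * B k j = 0 :=
  h.sum_mul_mobius_mul_eq_zero_of_pow (m := 1) hiq (by simpa using hij.diagonal_mul _)
    (by simpa using h.mobius_mul_ne_zero hij (h.ne_of_mapsBasis hij) hjq)

lemma sum_mul_mobius_mul_eq_zero' [Nontrivial n] (h : FermatPair a B) (hij : MapsBasis B i j)
    (hiq : i ≠ q) (hjq : j ≠ q) : ∑ k, B i k * mobius a j q k * B k j = 0 := by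
  have hconj := h.conjTranspose.sum_mul_mobius_mul_eq_zero (hij.conjTranspose h.unitary) hjq hiq
  have hterm (k : n) : star (Bᴴ j k * mobius a j q k * Bᴴ k i) =
      a j / a q * (B i k * mobius a j q k * B k j) := by
    simp only [conjTranspose_apply, star_mul', star_star, h.star_mobius]
    ring
  have := congrArg star hconj
  rw [star_sum, Finset.sum_congr rfl fun k _ => hterm k, ← Finset.mul_sum, star_zero] at this
  exact (mul_eq_zero.mp this).resolve_left (div_ne_zero (h.ne_zero j) (h.ne_zero q))

lemma sum_mul_mobius_mul_eq_zero_of_chain [Nontrivial n] (h : FermatPair a B)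
    (hij : MapsBasis B i j) (hjk : MapsBasis B j k) (hki : k ≠ i) (hiq : i ≠ q) (hjq : j ≠ q)
    (hkq : k ≠ q) : ∑ l, B i l * mobius a i q l * B l k = 0 := by
  have hmaps : MapsBasis (diagonal (mobius a i q) * B) i j := hij.diagonal_mul _
  refine h.sum_mul_mobius_mul_eq_zero_of_pow (m := 2) hiq ?_ ?_ <;> rw [sq]
  · exact (hjk.diagonal_mul _).mul hmaps
  · rw [hmaps.mul_apply, diagonal_mul]
    exact mul_ne_zero (mul_ne_zero (h.mobius_ne_zero hki hkq) (hjk.apply_ne_zero h.unitary))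
      (h.mobius_mul_ne_zero hij (h.ne_of_mapsBasis hij) hjq)

end

variable {a : Fin 5 → ℂ} {B : Matrix (Fin 5) (Fin 5) ℂ}

lemma mul_apply_eq_zero_of_mapsBasis (h : FermatPair a B) {i j k : Fin 5} (hij : MapsBasis B i j)
    (hki : k ≠ i) (hkj : k ≠ j) : B i k * B k j = 0 := by
  have hji := h.ne_of_mapsBasis hij
  obtain ⟨l, m, hnodup⟩ : ∃ l m, [i, j, k, l, m].Nodup := by
    clear * - hji hki hkj
    decide +revert
  have hsub {p q : Fin 5} (hpq : p ≠ q) : a p - a q ≠ 0 := sub_ne_zero.mpr (h.injective.ne hpq)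
  have h₁ := h.sum_mul_mobius_mul_eq_zero hij (q := m) (by grind) (by grind)
  have h₂ := h.sum_mul_mobius_mul_eq_zero' hij (q := m) (by grind) (by grind)
  rw [sum_eq_of_nodup hnodup] at h₁ h₂
  have hki' := hsub hki
  have hkj' := hsub hkj
  have hli := hsub (show l ≠ i by grind)
  have hlj := hsub (show l ≠ j by grind)
  simp only [h.apply_self, mobius, sub_self, zero_div, mul_zero, zero_mul, zero_add,
    add_zero] at h₁ h₂
  field_simp at h₁ h₂
  have hne := mul_ne_zero (mul_ne_zero (hsub (show k ≠ m by grind)) (hsub (show k ≠ l by grind)))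
    (hsub hji)
  refine (mul_eq_zero.mp ?_).resolve_left hne
  linear_combination (a k - a j) * h₁ - (a k - a i) * h₂

lemma exists_mapsBasis_mapsBasis (h : FermatPair a B) {i j : Fin 5} (hij : MapsBasis B i j) :
    ∃ x y z, z ≠ x ∧ MapsBasis B x y ∧ MapsBasis B y z := by
  have hji := h.ne_of_mapsBasis hij
  have hBij : B i j = 0 := by
    have := (h.sum_mul_eq_zero_and (by decide) i).1
    rw [← mul_apply, hij.mul_apply] at this
    exact (mul_eq_zero.mp this).resolve_right (hij.apply_ne_zero h.unitary)
  obtain ⟨k, hBik⟩ := exists_apply_ne_zero_of_mem_unitaryGroup' h.unitary i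
  obtain ⟨l, hBlj⟩ := exists_apply_ne_zero_of_mem_unitaryGroup h.unitary j
  have hki : k ≠ i := fun hki => hBik (hki ▸ h.apply_self k)
  have hkj : k ≠ j := fun hkj => hBik (hkj ▸ hBij)
  have hli : l ≠ i := fun hli => hBlj (hli ▸ hBij)
  have hlj : l ≠ j := fun hlj => hBlj (hlj ▸ h.apply_self l)
  have hBil : B i l = 0 :=
    (mul_eq_zero.mp (h.mul_apply_eq_zero_of_mapsBasis hij hli hlj)).resolve_right hBlj
  have hBkj : B k j = 0 :=
    (mul_eq_zero.mp (h.mul_apply_eq_zero_of_mapsBasis hij hki hkj)).resolve_left hBik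
  have hkl : k ≠ l := fun hkl => hBik (hkl ▸ hBil)
  obtain ⟨m, hmi, hmj, hm⟩ : ∃ m, m ≠ i ∧ m ≠ j ∧
      ∀ p, p = i ∨ p = j ∨ p = k ∨ p = l ∨ p = m := by
    clear * - hji hki hkj hli hlj hkl
    decide +revert
  rcases mul_eq_zero.mp (h.mul_apply_eq_zero_of_mapsBasis hij hmi hmj) with hBim | hBmj
  · refine ⟨k, i, j, hkj.symm, .of_row h.unitary fun p hp => ?_, hij⟩
    rcases hm p with rfl | rfl | rfl | rfl | rfl
    exacts [h.apply_self p, hBij, absurd rfl hp, hBil, hBim]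
  · refine ⟨i, j, l, hli, hij, fun p hp => ?_⟩
    rcases hm p with rfl | rfl | rfl | rfl | rfl
    exacts [hBij, h.apply_self p, hBkj, absurd rfl hp, hBmj]

lemma mul_apply_eq_zero_of_chain (h : FermatPair a B) {x y z u v : Fin 5}
    (hnodup : [x, y, z, u, v].Nodup) (hxy : MapsBasis B x y) (hyz : MapsBasis B y z) :
    B x u * B u z = 0 := by
  have hsum := h.sum_mul_mobius_mul_eq_zero_of_chain hxy hyz (q := v) (by grind) (by grind)
    (by grind) (by grind)
  have hu : mobius a x v u ≠ 0 := h.mobius_ne_zero (by grind) (by grind)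
  have hv : mobius a x v v = 0 := by simp [mobius]
  rw [sum_eq_of_nodup hnodup, h.apply_self, h.apply_self, hyz x (by grind), hv] at hsum
  exact (mul_eq_zero.mp (by linear_combination hsum)).resolve_left hu

lemma exists_path_of_mapsBasis (h : FermatPair a B) {x y z : Fin 5} (hzx : z ≠ x)
    (hxy : MapsBasis B x y) (hyz : MapsBasis B y z) :
    ∃ u v, [x, y, z, u, v].Nodup ∧ MapsBasis B z u ∧ MapsBasis B u v := by
  have hyx := h.ne_of_mapsBasis hxy
  have hzy := h.ne_of_mapsBasis hyz
  have hBxy : B x y = 0 := hyz x hzx.symm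
  have hBxz : B x z = 0 := (mul_eq_zero.mp
    (h.mul_apply_eq_zero_of_mapsBasis hxy hzx hzy)).resolve_right (hyz.apply_ne_zero h.unitary)
  have hByz : B y z = 0 := hxy.row_eq_zero h.unitary hzx
  obtain ⟨u, hBuz⟩ := exists_apply_ne_zero_of_mem_unitaryGroup h.unitary z
  have hux : u ≠ x := fun hux => hBuz (hux ▸ hBxz)
  have huy : u ≠ y := fun huy => hBuz (huy ▸ hByz)
  have huz : u ≠ z := fun huz => hBuz (huz ▸ h.apply_self u)
  obtain ⟨v, hnodup, hv⟩ : ∃ v, [x, y, z, u, v].Nodup ∧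
      ∀ p, p = x ∨ p = y ∨ p = z ∨ p = u ∨ p = v := by
    clear * - hyx hzy hzx hux huy huz
    decide +revert
  have hBxu : B x u = 0 :=
    (mul_eq_zero.mp (h.mul_apply_eq_zero_of_chain hnodup hxy hyz)).resolve_right hBuz
  have hvx : MapsBasis B v x := .of_row h.unitary fun p hp => by
    rcases hv p with rfl | rfl | rfl | rfl | rfl
    exacts [h.apply_self p, hBxy, hBxz, hBxu, absurd rfl hp]
  have hBvz : B v z = 0 := (mul_eq_zero.mp (h.mul_apply_eq_zero_of_chain
    (show [x, y, z, v, u].Nodup by grind) hxy hyz)).resolve_left (hvx.apply_ne_zero h.unitary)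
  refine ⟨u, v, hnodup, fun p hp => ?_, fun p hp => ?_⟩ <;>
    rcases hv p with rfl | rfl | rfl | rfl | rfl
  exacts [hBxz, hByz, h.apply_self p, absurd rfl hp, hBvz,
    hBxu, hxy.row_eq_zero h.unitary hux, hyz.row_eq_zero h.unitary huy, h.apply_self p,
    absurd rfl hp]

end FermatPair

lemma hasCyclicEigenbasis_of_path {n : ℕ} {B : Matrix (Fin n) (Fin n) ℂ} {e : ℕ → Fin n}
    (hpath : ∀ k, k + 1 < n → MapsBasis B (e k) (e (k + 1)))
    (hne : ∀ k < n, k ≠ 0 → e k ≠ e 0) (a : Fin n → ℂ) : HasCyclicEigenbasis B (diagonal a) := by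
  have hpow (k : ℕ) (hk : k < n) : MapsBasis (B ^ k) (e 0) (e k) := by
    induction k with
    | zero => exact fun l hl => by rw [pow_zero, one_apply_ne hl]
    | succ k ih => exact pow_succ' B k ▸ (hpath k hk).mul (ih (by omega))
  refine ⟨Pi.single (e 0) 1, fun k hk => ?_, fun k hk => ⟨a (e k), funext fun l => ?_⟩⟩
  · rw [mulVec_single_one, Pi.star_single, star_one, single_one_dotProduct, col_apply]
    split_ifs with hk0
    · rw [hk0, pow_zero, one_apply_eq]
    · exact hpow k hk _ (hne k hk hk0).symm
  · rw [mulVec_single_one, mulVec_diagonal, Pi.smul_apply, col_apply, smul_eq_mul]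
    rcases eq_or_ne l (e k) with rfl | hl
    · rfl
    · rw [hpow k hk l hl, mul_zero, mul_zero]

namespace FermatPair

variable {a : Fin 5 → ℂ} {B : Matrix (Fin 5) (Fin 5) ℂ}

lemma hasCyclicEigenbasis_of_mapsBasis (h : FermatPair a B) {i j : Fin 5} (hij : MapsBasis B i j) :
    HasCyclicEigenbasis B (diagonal a) := by
  obtain ⟨x, y, z, hzx, hxy, hyz⟩ := h.exists_mapsBasis_mapsBasis hij
  obtain ⟨u, v, hnodup, hzu, huv⟩ := h.exists_path_of_mapsBasis hzx hxy hyz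
  refine hasCyclicEigenbasis_of_path (e := fun k => [x, y, z, u, v].getD k x) (fun k hk => ?_)
    (fun k hk hk0 => ?_) a
  · obtain rfl | rfl | rfl | rfl : k = 0 ∨ k = 1 ∨ k = 2 ∨ k = 3 := by omega
    exacts [hxy, hyz, hzu, huv]
  · obtain rfl | rfl | rfl | rfl : k = 1 ∨ k = 2 ∨ k = 3 ∨ k = 4 := by omega
    all_goals simp; grind

theorem hasCyclicEigenbasis_or (h : FermatPair a B) :
    HasCyclicEigenbasis (diagonal a) B ∨ HasCyclicEigenbasis B (diagonal a) := by
  by_cases hmaps : ∃ i j, MapsBasis B i j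
  · obtain ⟨i, j, hij⟩ := hmaps
    exact Or.inr (h.hasCyclicEigenbasis_of_mapsBasis hij)
  · push Not at hmaps
    exact Or.inl (h.hasCyclicEigenbasis_of_not_mapsBasis hmaps)

end FermatPair

end Monomial

section Normal

variable {n : Type*} [Fintype n]

lemma conjTranspose_mulVec_eq_zero_of_isStarNormal {A : Matrix n n ℂ} (hA : IsStarNormal A)
    {x : n → ℂ} (hx : A *ᵥ x = 0) : Aᴴ *ᵥ x = 0 := by
  have hcomm : A * Aᴴ = Aᴴ * A := hA.star_comm_self.symm
  have hzero : star (Aᴴ *ᵥ x) ⬝ᵥ (Aᴴ *ᵥ x) = 0 := by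
    rw [star_mulVec, conjTranspose_conjTranspose, ← dotProduct_mulVec, mulVec_mulVec, hcomm,
      ← mulVec_mulVec, hx, mulVec_zero, dotProduct_zero]
  open scoped ComplexOrder in exact dotProduct_star_self_eq_zero.mp hzero

lemma conjTranspose_mulVec_eq_smul_of_isStarNormal {A : Matrix n n ℂ} (hA : IsStarNormal A) {c : ℂ}
    {x : n → ℂ} (hx : A *ᵥ x = c • x) : Aᴴ *ᵥ x = star c • x := by
  classical
  have hnormal : IsStarNormal (A - c • (1 : Matrix n n ℂ)) :=
    ⟨by
      rw [star_sub, star_smul, star_one]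
      exact ((hA.star_comm_self.sub_right ((Commute.one_right _).smul_right c)).sub_left
        ((Commute.one_left _).smul_left _))⟩
  have := conjTranspose_mulVec_eq_zero_of_isStarNormal hnormal (x := x) (by
    rw [sub_mulVec, smul_mulVec, one_mulVec, hx, sub_self])
  rwa [conjTranspose_sub, conjTranspose_smul, conjTranspose_one, sub_mulVec, smul_mulVec,
    one_mulVec, sub_eq_zero] at this

lemma dotProduct_eq_zero_of_isStarNormal {A : Matrix n n ℂ} (hA : IsStarNormal A) {c d : ℂ}
    {x y : n → ℂ} (hx : A *ᵥ x = c • x) (hy : A *ᵥ y = d • y) (hcd : c ≠ d) :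
    star x ⬝ᵥ y = 0 := by
  have hx' : star x ᵥ* A = c • star x := by
    rw [← conjTranspose_conjTranspose A, ← star_mulVec,
      conjTranspose_mulVec_eq_smul_of_isStarNormal hA hx, star_smul, star_star]
  have : c * (star x ⬝ᵥ y) = d * (star x ⬝ᵥ y) := by
    rw [← smul_eq_mul, ← smul_dotProduct, ← hx', ← dotProduct_mulVec, hy, dotProduct_smul,
      smul_eq_mul]
  exact (mul_eq_zero.mp (by linear_combination this)).resolve_left (sub_ne_zero.mpr hcd)

variable [DecidableEq n]

lemma exists_unit_mulVec_eq_smul {A : Matrix n n ℂ} {c : ℂ} (hc : A.charpoly.IsRoot c) :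
    ∃ x : n → ℂ, star x ⬝ᵥ x = 1 ∧ A *ᵥ x = c • x := by
  rw [Polynomial.IsRoot, eval_charpoly] at hc
  obtain ⟨x, hx, heig⟩ := exists_mulVec_eq_zero_iff.mpr hc
  rw [scalar_apply, ← smul_one_eq_diagonal, sub_mulVec, smul_mulVec, one_mulVec, sub_eq_zero]
    at heig
  set u : EuclideanSpace ℂ n := WithLp.toLp 2 x with hu
  have hu0 : u ≠ 0 := by simpa [hu] using hx
  refine ⟨(‖u‖ : ℂ)⁻¹ • x, ?_, by rw [mulVec_smul, ← heig, smul_comm]⟩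
  have hnorm : ‖(‖u‖ : ℂ)⁻¹ • u‖ = 1 := norm_smul_inv_norm hu0
  have hinner : inner ℂ ((‖u‖ : ℂ)⁻¹ • u) ((‖u‖ : ℂ)⁻¹ • u) = 1 := by
    rw [inner_self_eq_norm_sq_to_K, hnorm]
    simp
  rw [← hinner, EuclideanSpace.inner_eq_star_dotProduct, dotProduct_comm]
  rfl

lemma exists_unitary_conj_apply {v : n → n → ℂ}
    (hv : ∀ i j, star (v i) ⬝ᵥ v j = (1 : Matrix n n ℂ) i j) :
    ∃ U ∈ unitaryGroup n ℂ, ∀ (M : Matrix n n ℂ) (i j : n),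
      (U * M * Uᴴ) i j = star (v i) ⬝ᵥ (M *ᵥ v j) := by
  set U : Matrix n n ℂ := of fun i k => star (v i k) with hU
  have hUH : Uᴴ = of fun k j => v j k := by
    ext
    simp [hU]
  have happly (M : Matrix n n ℂ) (i j : n) :
      (U * M * Uᴴ) i j = star (v i) ⬝ᵥ (M *ᵥ v j) := by
    rw [mul_assoc, hUH]
    rfl
  refine ⟨U, mem_unitaryGroup_iff.mpr ?_, happly⟩
  ext i j
  simpa [hv, star_eq_conjTranspose] using happly 1 i j

lemma exists_unitary_conj_eq_diagonal {A : Matrix n n ℂ} (hA : IsStarNormal A) {a : n → ℂ}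
    (ha : Function.Injective a) (hroot : ∀ k, A.charpoly.IsRoot (a k)) :
    ∃ U ∈ unitaryGroup n ℂ, U * A * Uᴴ = diagonal a := by
  choose v hnorm heig using fun k => exists_unit_mulVec_eq_smul (hroot k)
  have horth (i j : n) : star (v i) ⬝ᵥ v j = (1 : Matrix n n ℂ) i j := by
    rcases eq_or_ne i j with rfl | hij
    · rw [hnorm, one_apply_eq]
    · rw [dotProduct_eq_zero_of_isStarNormal hA (heig i) (heig j) (ha.ne hij), one_apply_ne hij]
  obtain ⟨U, hU, happly⟩ := exists_unitary_conj_apply horth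
  refine ⟨U, hU, ?_⟩
  ext i j
  rw [happly, heig, dotProduct_smul, horth, smul_eq_mul, mul_comm, ← mul_diagonal, one_mul]

end Normal

section Spectrum

variable {n : Type*} [Fintype n] [DecidableEq n]

lemma mem_unitaryGroup_of_norm_le_one [Nonempty n] {B : Matrix n n ℂ} {m : ℕ} (hm : m ≠ 0)
    (hpow : B ^ m = 1) (hB : ‖toEuclideanCLM (𝕜 := ℂ) B‖ ≤ 1) : B ∈ unitaryGroup n ℂ := by
  set T := toEuclideanCLM (n := n) (𝕜 := ℂ) B with hT
  have hTm : T ^ (m - 1) * T = 1 := by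
    rw [← pow_succ, Nat.sub_add_cancel (Nat.pos_of_ne_zero hm), hT, ← map_pow, hpow, map_one]
  have hle (k : ℕ) (x : EuclideanSpace ℂ n) : ‖(T ^ k) x‖ ≤ ‖x‖ := by
    refine ((T ^ k).le_of_opNorm_le ?_ x).trans_eq (one_mul _)
    exact (norm_pow_le T k).trans (pow_le_one₀ (norm_nonneg T) hB)
  have hiso (x : EuclideanSpace ℂ n) : ‖T x‖ = ‖x‖ := by
    refine le_antisymm (by simpa using hle 1 x) ?_
    have := hle (m - 1) (T x)
    rwa [← mul_apply_eq_comp, hTm, one_apply_eq_self] at this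
  refine mem_unitaryGroup_iff'.mpr (EquivLike.injective (toEuclideanCLM (n := n) (𝕜 := ℂ)) ?_)
  rw [map_mul, map_star, map_one]
  exact T.norm_map_iff_adjoint_comp_self.mp hiso

open Polynomial in
lemma charpoly_eq_X_pow_card_sub_one [Nonempty n] {M : Matrix n n ℂ}
    (h : ∀ w : ℂ, w ^ Fintype.card n = 1 → (w • M - 1).det = 0) :
    M.charpoly = X ^ Fintype.card n - 1 := by
  have hcard : Fintype.card n ≠ 0 := Fintype.card_ne_zero
  have hmonic : (X ^ Fintype.card n - 1 : ℂ[X]).Monic := by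
    simpa using monic_X_pow_sub_C (1 : ℂ) hcard
  have hdegree : (X ^ Fintype.card n - 1 : ℂ[X]).degree = Fintype.card n := by
    simpa using degree_X_pow_sub_C (R := ℂ) Fintype.card_pos 1
  have hroots := (Complex.isPrimitiveRoot_exp _ hcard).card_nthRootsFinset
  refine eq_of_degree_le_of_eval_finset_eq (nthRootsFinset (Fintype.card n) (1 : ℂ)) ?_ ?_ ?_ ?_
  · rw [charpoly_degree_eq_dim, hroots]
  · rw [charpoly_degree_eq_dim, hdegree]
  · rw [M.charpoly_monic, hmonic]
  · intro w hw
    have hw : w ^ Fintype.card n = 1 := (mem_nthRootsFinset Fintype.card_pos 1).mp hw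
    have hw0 : w ≠ 0 := by
      rintro rfl
      simp at hw
    have : scalar n w - M = -w • (w⁻¹ • M - 1) := by
      rw [smul_sub, smul_smul, neg_mul, mul_inv_cancel₀ hw0, scalar_apply, ← smul_one_eq_diagonal]
      module
    rw [eval_charpoly, this, det_smul, h _ (by rw [inv_pow, hw, inv_one]), mul_zero]
    simp [hw]

lemma pow_card_eq_one_of_charpoly {M : Matrix n n ℂ}
    (h : M.charpoly = Polynomial.X ^ Fintype.card n - 1) : M ^ Fintype.card n = 1 := by
  have := aeval_self_charpoly M
  rwa [h, map_sub, map_pow, Polynomial.aeval_X, map_one, sub_eq_zero] at this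

lemma exists_injective_pow_card_eq_one (n : Type*) [Fintype n] [Nonempty n] :
    ∃ a : n → ℂ, Function.Injective a ∧ ∀ k, a k ^ Fintype.card n = 1 := by
  have hζ := Complex.isPrimitiveRoot_exp (Fintype.card n) Fintype.card_ne_zero
  set e := Fintype.equivFin n
  refine ⟨fun k => exp (2 * Real.pi * I / Fintype.card n) ^ (e k : ℕ), fun k l hkl => ?_,
    fun k => ?_⟩
  · exact e.injective (Fin.ext (hζ.pow_inj (e k).isLt (e l).isLt hkl))
  · rw [pow_right_comm, hζ.pow_eq_one, one_pow]

/-- The proper projective joint spectrum of `A`, `B`, `A * B` contains the Fermat hypersurface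
`x ^ N + y ^ N + z ^ N = 1`, where `N` is the size of the matrices. -/
def FermatSpectrum (A B : Matrix n n ℂ) : Prop :=
  ∀ x y z : ℂ, x ^ Fintype.card n + y ^ Fintype.card n + z ^ Fintype.card n = 1 →
    (x • A + y • B + z • (A * B) - 1).det = 0

namespace FermatSpectrum

variable {A B : Matrix n n ℂ}

lemma charpoly_left [Nonempty n] (h : FermatSpectrum A B) :
    A.charpoly = Polynomial.X ^ Fintype.card n - 1 :=
  charpoly_eq_X_pow_card_sub_one fun w hw => by simpa using h w 0 0 (by simp [hw])

lemma charpoly_right [Nonempty n] (h : FermatSpectrum A B) :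
    B.charpoly = Polynomial.X ^ Fintype.card n - 1 :=
  charpoly_eq_X_pow_card_sub_one fun w hw => by simpa using h 0 w 0 (by simp [hw])

lemma conj (h : FermatSpectrum A B) {V : Matrix n n ℂ} (hV : V ∈ unitaryGroup n ℂ) :
    FermatSpectrum (V * A * Vᴴ) (V * B * Vᴴ) := by
  intro x y z hxyz
  have hVV : Vᴴ * V = 1 := mem_unitaryGroup_iff'.mp hV
  have hVV' : V * Vᴴ = 1 := mem_unitaryGroup_iff.mp hV
  have hconj : x • (V * A * Vᴴ) + y • (V * B * Vᴴ) + z • (V * A * Vᴴ * (V * B * Vᴴ)) - 1 =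
      V * (x • A + y • B + z • (A * B) - 1) * Vᴴ := by
    rw [show V * A * Vᴴ * (V * B * Vᴴ) = V * (A * (Vᴴ * V) * B) * Vᴴ by noncomm_ring, hVV, mul_one]
    simp only [mul_add, add_mul, mul_sub, sub_mul, Matrix.mul_smul, Matrix.smul_mul, mul_one, hVV']
  rw [hconj, det_mul, det_mul, h x y z hxyz, mul_zero, zero_mul]

lemma momentsVanish [Nonempty n] (hodd : Odd (Fintype.card n)) {a : n → ℂ}
    (h : FermatSpectrum (diagonal a) B) (ha : Function.Injective a)
    (hpow : ∀ k, a k ^ Fintype.card n = 1) : MomentsVanish a B := by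
  refine momentsVanish_of_det_eq_zero ha fun i j s => ?_
  have hi : a i ≠ 0 := fun hi => by simpa [hi] using hpow i
  have hdet := h (a i)⁻¹ (-(a j * s / a i)) (s / a i) (by
    rw [hodd.neg_pow, div_pow, div_pow, mul_pow, inv_pow, hpow, hpow]
    ring)
  have hpencil : diagonal (fun k => a k - a i) + s • (diagonal (fun k => a k - a j) * B) =
      a i • ((a i)⁻¹ • diagonal a + (-(a j * s / a i)) • B + (s / a i) • (diagonal a * B) - 1) := by
    ext k l
    simp only [Matrix.add_apply, Matrix.sub_apply, Matrix.smul_apply, diagonal_mul, smul_eq_mul,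
      diagonal_apply, one_apply]
    split_ifs <;> field_simp <;> ring
  rw [hpencil, det_smul, hdet, mul_zero]

lemma pow_card_left [Nonempty n] (h : FermatSpectrum A B) : A ^ Fintype.card n = 1 :=
  pow_card_eq_one_of_charpoly h.charpoly_left

lemma pow_card_right [Nonempty n] (h : FermatSpectrum A B) : B ^ Fintype.card n = 1 :=
  pow_card_eq_one_of_charpoly h.charpoly_right

lemma mem_unitaryGroup_right [Nonempty n] (h : FermatSpectrum A B)
    (hB : ‖toEuclideanCLM (𝕜 := ℂ) B‖ ≤ 1) : B ∈ unitaryGroup n ℂ :=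
  mem_unitaryGroup_of_norm_le_one Fintype.card_ne_zero h.pow_card_right hB

lemma exists_fermatPair [Nonempty n] (hodd : Odd (Fintype.card n)) (h : FermatSpectrum A B)
    (hA : IsStarNormal A) (hB : ‖toEuclideanCLM (𝕜 := ℂ) B‖ ≤ 1) :
    ∃ a : n → ℂ, ∃ V ∈ unitaryGroup n ℂ, V * A * Vᴴ = diagonal a ∧ FermatPair a (V * B * Vᴴ) := by
  obtain ⟨a, ha, hpow⟩ := exists_injective_pow_card_eq_one n
  obtain ⟨V, hV, hVA⟩ := exists_unitary_conj_eq_diagonal hA ha fun k => by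
    rw [h.charpoly_left]
    simp [hpow k]
  have hunitary : V * B * Vᴴ ∈ unitaryGroup n ℂ :=
    mul_mem (mul_mem hV (h.mem_unitaryGroup_right hB)) (Unitary.star_mem hV)
  exact ⟨a, V, hV, hVA, ha, hpow, hunitary, (hVA ▸ h.conj hV).momentsVanish hodd ha hpow⟩

end FermatSpectrum

end Spectrum

section NormalForm

lemma pow_fin_val_add {M : Type*} [Monoid M] {n : ℕ} {x : M} (hx : x ^ n = 1) (i j : Fin n) :
    x ^ ((i + j : Fin n) : ℕ) = x ^ (i : ℕ) * x ^ (j : ℕ) := by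
  rw [Fin.val_add, ← pow_eq_pow_mod _ hx, pow_add]

variable {n : ℕ} [NeZero n] {X Y : Matrix (Fin n) (Fin n) ℂ}

lemma HasCyclicEigenbasis.exists_unitary_conj (h : HasCyclicEigenbasis X Y)
    (hX : X ∈ unitaryGroup (Fin n) ℂ) (hpow : X ^ n = 1) :
    ∃ U ∈ unitaryGroup (Fin n) ℂ,
      U * X * Uᴴ = of (fun j k : Fin n => if j = k + 1 then 1 else 0) ∧
        ∃ c : Fin n → ℂ, U * Y * Uᴴ = diagonal c := by
  obtain ⟨f, horth, heig⟩ := h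
  set v : Fin n → Fin n → ℂ := fun k => X ^ (k : ℕ) *ᵥ f with hv
  choose c hc using fun k : Fin n => heig k k.isLt
  have hdot (i j : Fin n) : star (v i) ⬝ᵥ v j = (1 : Matrix (Fin n) (Fin n) ℂ) i j := by
    have hmul : (X ^ (i : ℕ))ᴴ * X ^ (j : ℕ) = X ^ ((j - i : Fin n) : ℕ) := by
      have hj := pow_fin_val_add hpow i (j - i)
      rw [add_sub_cancel] at hj
      rw [hj, ← mul_assoc, ← star_eq_conjTranspose, mem_unitaryGroup_iff'.mp (pow_mem hX _),
        one_mul]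
    rw [hv, star_mulVec, ← dotProduct_mulVec, mulVec_mulVec, hmul, horth _ (Fin.isLt _), one_apply]
    simp only [Fin.val_eq_zero_iff, sub_eq_zero, eq_comm]
  have hXv (j : Fin n) : X *ᵥ v j = v (j + 1) := by
    have hval : X ^ ((1 : Fin n) : ℕ) = X := by
      rw [Fin.val_one', ← pow_eq_pow_mod _ hpow, pow_one]
    simp only [hv]
    rw [mulVec_mulVec, add_comm, pow_fin_val_add hpow, hval]
  obtain ⟨U, hU, happly⟩ := exists_unitary_conj_apply hdot
  refine ⟨U, hU, ?_, c, ?_⟩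
  · ext i j
    rw [happly, hXv, hdot, one_apply, of_apply]
  · ext i j
    rw [happly, hc, dotProduct_smul, hdot, smul_eq_mul, mul_comm, ← mul_diagonal, one_mul]

lemma exists_isPermMatrix_diagonal_eq {n : ℕ} {ω : ℂ} (hω : IsPrimitiveRoot ω n) {c : Fin n → ℂ}
    (hc : (diagonal c).charpoly = Polynomial.X ^ n - 1) :
    ∃ P : Matrix (Fin n) (Fin n) ℂ, IsPermMatrix P ∧
      diagonal c = Pᵀ * diagonal (fun j : Fin n => ω ^ (j : ℕ)) * P := by
  have hroot (j : Fin n) : ∃ k, c k = ω ^ (j : ℕ) := by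
    have heval := congrArg (Polynomial.eval (ω ^ (j : ℕ))) hc
    rw [charpoly_diagonal, Polynomial.eval_prod] at heval
    simp only [Polynomial.eval_sub, Polynomial.eval_X, Polynomial.eval_C, Polynomial.eval_pow,
      Polynomial.eval_one, pow_right_comm ω _ n, hω.pow_eq_one, one_pow, sub_self] at heval
    obtain ⟨k, -, hk⟩ := Finset.prod_eq_zero_iff.mp heval
    exact ⟨k, (sub_eq_zero.mp hk).symm⟩
  choose τ hτ using hroot
  have hinj : Function.Injective τ := fun i j hij =>
    Fin.ext (hω.pow_inj i.isLt j.isLt (by rw [← hτ, ← hτ, hij]))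
  set e : Equiv.Perm (Fin n) := Equiv.ofBijective τ (Finite.injective_iff_bijective.mp hinj)
  have hc (i : Fin n) : c i = ω ^ (e.symm i : ℕ) := by
    rw [← hτ]
    exact congrArg c (e.apply_symm_apply i).symm
  refine ⟨of fun i j => if i = e.symm j then 1 else 0, ⟨e.symm, rfl⟩, ?_⟩
  ext i j
  rw [mul_assoc, mul_apply]
  rcases eq_or_ne i j with rfl | hij
  · simp [hc]
  · simp [hij, hij.symm]

lemma HasCyclicEigenbasis.exists_isPermMatrix {ω : ℂ} (hω : IsPrimitiveRoot ω n)
    (h : HasCyclicEigenbasis X Y) (hX : X ∈ unitaryGroup (Fin n) ℂ) (hpow : X ^ n = 1)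
    (hY : Y.charpoly = Polynomial.X ^ n - 1) :
    ∃ P U : Matrix (Fin n) (Fin n) ℂ, IsPermMatrix P ∧ U * Uᴴ = 1 ∧
      U * X * Uᴴ = of (fun j k : Fin n => if j = k + 1 then 1 else 0) ∧
        U * Y * Uᴴ = Pᵀ * diagonal (fun j : Fin n => ω ^ (j : ℕ)) * P := by
  obtain ⟨U, hU, hUX, c, hUY⟩ := h.exists_unitary_conj hX hpow
  have hc : (diagonal c).charpoly = Polynomial.X ^ n - 1 := by
    rw [← hUY, ← hY, charpoly_mul_comm, ← mul_assoc, ← star_eq_conjTranspose,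
      mem_unitaryGroup_iff'.mp hU, one_mul]
  obtain ⟨P, hP, hcP⟩ := exists_isPermMatrix_diagonal_eq hω hc
  exact ⟨P, U, hP, mem_unitaryGroup_iff.mp hU, hUX, hUY.trans hcP⟩

end NormalForm

section FermatFive

variable {A B : Matrix (Fin 5) (Fin 5) ℂ}

lemma FermatSpectrum.mem_unitaryGroup_left_and_hasCyclicEigenbasis_or (h : FermatSpectrum A B)
    (hA : IsStarNormal A) (hB : ‖toEuclideanCLM (𝕜 := ℂ) B‖ ≤ 1) :
    A ∈ unitaryGroup (Fin 5) ℂ ∧ (HasCyclicEigenbasis A B ∨ HasCyclicEigenbasis B A) := by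
  obtain ⟨a, V, hV, hVA, hpair⟩ := h.exists_fermatPair (by decide) hA hB
  have hVH : Vᴴ ∈ unitaryGroup (Fin 5) ℂ := Unitary.star_mem hV
  have hback (M : Matrix (Fin 5) (Fin 5) ℂ) : Vᴴ * (V * M * Vᴴ) * Vᴴᴴ = M := by
    have hVV : Vᴴ * V = 1 := mem_unitaryGroup_iff'.mp hV
    rw [conjTranspose_conjTranspose, mul_assoc V, ← mul_assoc, hVV, one_mul, mul_assoc, hVV,
      mul_one]
  have hAV : Vᴴ * diagonal a * Vᴴᴴ = A := hVA ▸ hback A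
  refine ⟨hAV ▸ mul_mem (mul_mem hVH hpair.diagonal_mem_unitaryGroup) (Unitary.star_mem hVH), ?_⟩
  have hconj := hpair.hasCyclicEigenbasis_or.imp (·.conj hVH) (·.conj hVH)
  rwa [hAV, hback] at hconj

end FermatFive

theorem stmt_6
    (ω : ℂ) (hω : ω = Complex.exp (2 * Real.pi * Complex.I / 5))
    (A₅ Bhat : Matrix (Fin 5) (Fin 5) ℂ)
    (hA₅ : A₅ = Matrix.diagonal (fun j : Fin 5 => ω ^ (j : ℕ)))
    (hBhat : Bhat = Matrix.of fun j k : Fin 5 => if j = k + 1 then 1 else 0)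
    (A B : Matrix (Fin 5) (Fin 5) ℂ)
    (hA : A * Aᴴ = Aᴴ * A)
    (hB : ‖Matrix.toEuclideanCLM (𝕜 := ℂ) B‖ = 1)
    (hspec : {p : ℂ × ℂ × ℂ |
        (p.1 • A + p.2.1 • B + p.2.2 • (A * B) - 1).det = 0} =
      {p : ℂ × ℂ × ℂ | p.1 ^ 5 + p.2.1 ^ 5 + p.2.2 ^ 5 = 1}) :
    ∃ P U : Matrix (Fin 5) (Fin 5) ℂ, IsPermMatrix P ∧ U * Uᴴ = 1 ∧
      ((U * A * Uᴴ = Pᵀ * A₅ * P ∧ U * B * Uᴴ = Bhat) ∨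
       (U * A * Uᴴ = Bhat ∧ U * B * Uᴴ = Pᵀ * A₅ * P)) := by
  subst hA₅ hBhat
  have hprim : IsPrimitiveRoot ω 5 := by
    simpa [hω] using Complex.isPrimitiveRoot_exp 5 (by decide)
  have hfermat : FermatSpectrum A B := fun x y z hxyz =>
    (Set.ext_iff.mp hspec (x, y, z)).mpr hxyz
  obtain ⟨hAunitary, hbasis | hbasis⟩ :=
    hfermat.mem_unitaryGroup_left_and_hasCyclicEigenbasis_or ⟨hA.symm⟩ hB.le
  · obtain ⟨P, U, hP, hU, hUA, hUB⟩ := hbasis.exists_isPermMatrix hprim hAunitary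
      hfermat.pow_card_left hfermat.charpoly_right
    exact ⟨P, U, hP, hU, Or.inr ⟨hUA, hUB⟩⟩
  · obtain ⟨P, U, hP, hU, hUB, hUA⟩ := hbasis.exists_isPermMatrix hprim
      (hfermat.mem_unitaryGroup_right hB.le) hfermat.pow_card_right hfermat.charpoly_left
    exact ⟨P, U, hP, hU, Or.inl ⟨hUA, hUB⟩⟩
end
end
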